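/- arXiv:0804.1763 — 4 statements merged into one kernel-verified Lean document; each statement's English description precedes it below -/
import Mathlib

section
/- The subgroup V of GL(4,ℚ) generated by the six matrices s₁, …, s₆ is finite of cardinality 1152 = 2⁷·3². (V is the automorphism group of the root system of type D₄.) -/
/-- The simple reflection `s₁` of the Weyl group of `D₄`. -/
def s1 : Matrix (Fin 4) (Fin 4) ℚ := !![-1,0,0,0; 1,1,0,0; 0,0,1,0; 0,0,0,1]

/-- The simple reflection `s₂` of the Weyl group of `D₄`. -/
def s2 : Matrix (Fin 4) (Fin 4) ℚ := !![1,1,0,0; 0,-1,0,0; 0,1,1,0; 0,1,0,1]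

/-- The simple reflection `s₃` of the Weyl group of `D₄`. -/
def s3 : Matrix (Fin 4) (Fin 4) ℚ := !![1,0,0,0; 0,1,1,0; 0,0,-1,0; 0,0,0,1]

/-- The simple reflection `s₄` of the Weyl group of `D₄`. -/
def s4 : Matrix (Fin 4) (Fin 4) ℚ := !![1,0,0,0; 0,1,0,1; 0,0,1,0; 0,0,0,-1]

/-- The order-3 automorphism `s₅` of the Dynkin diagram of `D₄`. -/
def s5 : Matrix (Fin 4) (Fin 4) ℚ := !![0,0,1,0; 0,1,0,0; 0,0,0,1; 1,0,0,0]

/-- The order-2 automorphism `s₆` of the Dynkin diagram of `D₄`. -/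
def s6 : Matrix (Fin 4) (Fin 4) ℚ := !![1,0,0,0; 0,1,0,0; 0,0,0,1; 0,0,1,0]

/-!
The group `V` permutes the 24 roots of `D₄`. It does so transitively, because a root of maximal
height in its orbit is dominant and the highest root `θ` is the only dominant root. The roots
orthogonal to `θ` are `±α₁, ±α₃, ±α₄`, so the stabilizer of `θ` acts on `α₁, α₃, α₄` by signed
permutations, faithfully because `θ, α₁, α₃, α₄` is a basis. All signed permutations occur: the
reflections `s₁, s₃, s₄` supply the signs and the diagram automorphisms `s₅, s₆` the permutations.
Hence `|V| = 24 · (2³ · 3!)`.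
-/

open Equiv Function Matrix MulAction
open scoped Nat Pointwise

section MonomialAction

variable {G K X ι : Type*} [Group G] [MulAction G X] {b : ι → X}

theorem exists_forall_smul_eq_apply_perm {S : Set (Perm ι)} (hS : Subgroup.closure S = ⊤)
    (h : ∀ σ ∈ S, ∃ g : G, ∀ i, g • b i = b (σ i)) (σ : Perm ι) :
    ∃ g : G, ∀ i, g • b i = b (σ i) := by
  have hσ : σ ∈ Subgroup.closure S := hS ▸ Subgroup.mem_top σ
  induction hσ using Subgroup.closure_induction with
  | mem σ hσ => exact h σ hσ
  | one => exact ⟨1, fun i ↦ one_smul G (b i)⟩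
  | mul σ τ _ _ ihσ ihτ =>
    obtain ⟨g, hg⟩ := ihσ
    obtain ⟨g', hg'⟩ := ihτ
    exact ⟨g * g', fun i ↦ by rw [mul_smul, hg', hg, Perm.mul_apply]⟩
  | inv σ _ ih =>
    obtain ⟨g, hg⟩ := ih
    exact ⟨g⁻¹, fun i ↦ by simp [inv_smul_eq_iff, hg]⟩

variable [Group K] [MulAction K X] [SMulCommClass G K X]

theorem exists_forall_smul_eq_smul [Finite ι]
    (h : ∀ i (k : K), ∃ g : G, g • b i = k • b i ∧ ∀ j ≠ i, g • b j = b j) (k : ι → K) :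
    ∃ g : G, ∀ i, g • b i = k i • b i := by
  classical
  have := Fintype.ofFinite ι
  suffices ∀ s : Finset ι, ∃ g : G, ∀ i, g • b i = if i ∈ s then k i • b i else b i by
    simpa using this Finset.univ
  intro s
  induction s using Finset.induction_on with
  | empty => exact ⟨1, by simp⟩
  | insert j s hj ih =>
    obtain ⟨g, hg⟩ := ih
    obtain ⟨g', hg'j, hg'⟩ := h j (k j)
    refine ⟨g * g', fun i ↦ ?_⟩
    obtain rfl | hij := eq_or_ne i j
    · simp [mul_smul, hg'j, smul_comm g, hg, hj]
    · simp [mul_smul, hg' i hij, hg, hij]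

/-- The hypotheses identify `G` with the wreath product of `K` with the symmetric group on `ι`. -/
theorem card_eq_card_pow_mul_factorial_of_monomial [Finite ι]
    (hb : Injective fun p : K × ι ↦ p.1 • b p.2)
    (hfaithful : ∀ g : G, (∀ i, g • b i = b i) → g = 1)
    (hmonomial : ∀ (g : G) i, ∃ (k : K) (j : ι), g • b i = k • b j)
    (hfull : ∀ (k : ι → K) (σ : Perm ι), ∃ g : G, ∀ i, g • b i = k i • b (σ i)) :
    Nat.card G = Nat.card K ^ Nat.card ι * (Nat.card ι)! := by
  choose f hf using hfull
  have hinj : Injective fun p : (ι → K) × Perm ι ↦ f p.1 p.2 := by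
    rintro ⟨k, σ⟩ ⟨l, τ⟩ (h : f k σ = f l τ)
    have hpair (i : ι) : (k i, σ i) = (l i, τ i) := hb <| by
      simp only [← hf, h]
    exact Prod.ext (funext fun i ↦ congrArg Prod.fst (hpair i))
      (Equiv.ext fun i ↦ congrArg Prod.snd (hpair i))
  have hsurj : Surjective fun p : (ι → K) × Perm ι ↦ f p.1 p.2 := by
    intro g
    choose k τ hg using hmonomial g
    have hτ : Injective τ := fun i j hij ↦ by
      have h : g • (k i)⁻¹ • b i = g • (k j)⁻¹ • b j := by
        simp only [smul_comm g, hg, inv_smul_smul, hij]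
      exact congrArg Prod.snd (@hb ((k i)⁻¹, i) ((k j)⁻¹, j) (smul_left_cancel g h))
    let σ : Perm ι := Equiv.ofBijective τ (Finite.injective_iff_bijective.mp hτ)
    refine ⟨(k, σ), inv_mul_eq_one.mp (hfaithful _ fun i ↦ ?_)⟩
    rw [mul_smul, inv_smul_eq_iff, hf, hg]
    rfl
  rw [← Nat.card_congr (Equiv.ofBijective _ ⟨hinj, hsurj⟩), Nat.card_prod, Nat.card_fun,
    Nat.card_perm]

end MonomialAction

section LinearAction

theorem eq_one_of_forall_smul_eq {n R : Type*} [Fintype n] [DecidableEq n] [CommRing R]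
    {b : n → n → R} (hb : IsUnit (of b)) {g : GL n R} (h : ∀ i, g • b i = b i) : g = 1 := by
  have hmul : g.1 * (of b)ᵀ = 1 * (of b)ᵀ := by
    rw [one_mul]
    ext i j
    exact congrFun (h j) i
  exact Units.ext (((isUnit_transpose _).mpr hb).mul_right_cancel hmul)

/-- Strong orthogonality of `x` and `y` with respect to a root system `Φ`. For roots of a
simply laced system this is orthogonality, but its invariance under the linear automorphisms of `Φ`
does not involve an inner product. -/
def IsStronglyOrthogonal {M : Type*} [AddGroup M] [DecidableEq M] (Φ : Finset M) (x y : M) : Prop :=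
  x + y ∉ insert 0 Φ ∧ x - y ∉ insert 0 Φ

theorem IsStronglyOrthogonal.smul {G M : Type*} [Group G] [AddGroup M] [DecidableEq M]
    [DistribMulAction G M] {Φ : Finset M} {g : G} (hg : g • Φ = Φ) {x y : M}
    (h : IsStronglyOrthogonal Φ x y) : IsStronglyOrthogonal Φ (g • x) (g • y) := by
  have hinsert : g • insert 0 Φ = insert 0 Φ := by
    rw [Finset.smul_finset_insert, smul_zero, hg]
  rw [IsStronglyOrthogonal, ← smul_add, ← smul_sub, ← hinsert]
  simpa only [Finset.smul_mem_smul_finset_iff, IsStronglyOrthogonal] using h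

end LinearAction

/-- The matrices `s₁, …, s₆` as elements of `GL(4,ℚ)`, numbered from `0`. -/
def gen (i : Fin 6) : GL (Fin 4) ℚ :=
  GeneralLinearGroup.mkOfDetNeZero (![s1, s2, s3, s4, s5, s6] i) (by revert i; decide +kernel)

/-- The group `V`, acting on column vectors. -/
def autD4 : Subgroup (GL (Fin 4) ℚ) :=
  Subgroup.closure (Set.range gen)

namespace autD4

theorem gen_mem (i : Fin 6) : gen i ∈ autD4 :=
  Subgroup.subset_closure ⟨i, rfl⟩

/-- The simple roots, as the rows of the Cartan matrix: column vectors hold coordinates in the basis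
of fundamental weights. -/
def simpleRoot : Fin 4 → Fin 4 → ℚ :=
  ![![2, -1, 0, 0], ![-1, 2, -1, -1], ![0, -1, 2, 0], ![0, -1, 0, 2]]

/-- The positive roots of `D₄`, in order of increasing height. -/
def positiveRoots : Finset (Fin 4 → ℚ) :=
  {![2, -1, 0, 0], ![-1, 2, -1, -1], ![0, -1, 2, 0], ![0, -1, 0, 2],
    ![1, 1, -1, -1], ![-1, 1, 1, -1], ![-1, 1, -1, 1],
    ![1, 0, 1, -1], ![1, 0, -1, 1], ![-1, 0, 1, 1],
    ![1, -1, 1, 1], ![0, 1, 0, 0]}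

/-- The root system `D₄`. -/
def roots : Finset (Fin 4 → ℚ) :=
  positiveRoots ∪ -positiveRoots

/-- The highest root `θ = α₁ + 2α₂ + α₃ + α₄`, which is the second fundamental weight. -/
def highestRoot : Fin 4 → ℚ :=
  ![0, 1, 0, 0]

/-- The simple roots `α₁, α₃, α₄` at the three outer nodes of the Dynkin diagram. -/
def outerRoot (i : Fin 3) : Fin 4 → ℚ :=
  simpleRoot (Fin.succAbove 1 i)

/-- The height of a root, that is, the sum of its coefficients in the basis of simple roots; the
fundamental weights have heights `3, 5, 3, 3`. -/
def height (v : Fin 4 → ℚ) : ℚ :=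
  ![3, 5, 3, 3] ⬝ᵥ v

theorem card_roots : roots.card = 24 := by
  decide +kernel

theorem smul_roots {g : GL (Fin 4) ℚ} (hg : g ∈ autD4) : g • roots = roots := by
  have hgen : ∀ i, gen i • roots = roots := by decide +kernel
  have hle : autD4 ≤ stabilizer (GL (Fin 4) ℚ) roots :=
    (Subgroup.closure_le _).mpr (Set.range_subset_iff.mpr hgen)
  exact hle hg

theorem gen_castAdd_smul (i : Fin 4) (v : Fin 4 → ℚ) :
    gen (i.castAdd 2) • v = v - v i • simpleRoot i := by
  change ![s1, s2, s3, s4, s5, s6] (i.castAdd 2) *ᵥ v = _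
  ext j
  fin_cases i <;> fin_cases j <;>
    simp [s1, s2, s3, s4, simpleRoot, mulVec, dotProduct, Fin.sum_univ_four] <;> ring

theorem height_gen_castAdd_smul (i : Fin 4) (v : Fin 4 → ℚ) :
    height (gen (i.castAdd 2) • v) = height v - v i := by
  have hsimple : ∀ i, height (simpleRoot i) = 1 := by decide +kernel
  simp only [height] at hsimple ⊢
  rw [gen_castAdd_smul, dotProduct_sub, dotProduct_smul, hsimple, smul_eq_mul, mul_one]

theorem eq_highestRoot_of_dominant :
    ∀ v ∈ roots, (∀ i, 0 ≤ v i) → v = highestRoot := by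
  decide +kernel

theorem highestRoot_mem_orbit {v : Fin 4 → ℚ} (hv : v ∈ roots) :
    highestRoot ∈ orbit autD4 v := by
  have hsub : orbit autD4 v ⊆ roots := by
    rintro _ ⟨g, rfl⟩
    exact smul_roots g.2 ▸ Finset.smul_mem_smul_finset hv
  obtain ⟨w, hw, hmax⟩ := Set.exists_max_image (orbit autD4 v) height
    (roots.finite_toSet.subset hsub) (nonempty_orbit v)
  have hdominant (i : Fin 4) : 0 ≤ w i := by
    have := hmax _ (mem_orbit_of_mem_orbit ⟨gen (i.castAdd 2), gen_mem _⟩ hw)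
    rw [Subgroup.mk_smul, height_gen_castAdd_smul] at this
    linarith
  rwa [← eq_highestRoot_of_dominant w (hsub hw) hdominant]

theorem orbit_highestRoot : orbit autD4 highestRoot = roots := by
  refine Set.Subset.antisymm ?_ fun v hv ↦ mem_orbit_symm.mp (highestRoot_mem_orbit hv)
  rintro _ ⟨g, rfl⟩
  have hθ : highestRoot ∈ roots := by decide +kernel
  exact smul_roots g.2 ▸ Finset.smul_mem_smul_finset hθ

theorem gen_mem_stabilizer_highestRoot :
    ∀ i ≠ 1, (⟨gen i, gen_mem i⟩ : autD4) ∈ stabilizer autD4 highestRoot := by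
  have : ∀ i ≠ 1, gen i • highestRoot = highestRoot := by decide +kernel
  exact this

theorem exists_forall_smul_outerRoot_eq_units_smul (ε : Fin 3 → ℤˣ) :
    ∃ g : stabilizer autD4 highestRoot, ∀ i, g • outerRoot i = ε i • outerRoot i := by
  refine exists_forall_smul_eq_smul (fun i ε ↦ ?_) ε
  obtain rfl | rfl := Int.units_eq_one_or ε
  · exact ⟨1, by simp⟩
  · have hne : ∀ i : Fin 3, (Fin.succAbove 1 i).castAdd 2 ≠ (1 : Fin 6) := by decide
    have hneg : ∀ i, gen ((Fin.succAbove 1 i).castAdd 2) • outerRoot i = (-1 : ℤˣ) • outerRoot i ∧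
        ∀ j ≠ i, gen ((Fin.succAbove 1 i).castAdd 2) • outerRoot j = outerRoot j := by
      decide +kernel
    exact ⟨⟨_, gen_mem_stabilizer_highestRoot _ (hne i)⟩, hneg i⟩

theorem exists_forall_smul_outerRoot_eq_apply_perm (σ : Perm (Fin 3)) :
    ∃ g : stabilizer autD4 highestRoot, ∀ i, g • outerRoot i = outerRoot (σ i) := by
  have hclosure : Subgroup.closure {(finRotate 3)⁻¹, swap 2 ((finRotate 3)⁻¹ 2)} = ⊤ :=
    Perm.closure_cycle_adjacent_swap isCycle_finRotate.inv (by decide) 2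
  have hrotate : ∀ i, gen 4 • outerRoot i = outerRoot ((finRotate 3)⁻¹ i) := by decide +kernel
  have hswap : ∀ i, gen 5 • outerRoot i = outerRoot (swap 2 ((finRotate 3)⁻¹ 2) i) := by
    decide +kernel
  refine exists_forall_smul_eq_apply_perm hclosure ?_ σ
  rintro _ (rfl | rfl)
  · exact ⟨⟨_, gen_mem_stabilizer_highestRoot 4 (by decide)⟩, hrotate⟩
  · exact ⟨⟨_, gen_mem_stabilizer_highestRoot 5 (by decide)⟩, hswap⟩

theorem exists_eq_units_smul_outerRoot {v : Fin 4 → ℚ} (hv : v ∈ roots)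
    (horth : IsStronglyOrthogonal roots highestRoot v) :
    ∃ (ε : ℤˣ) (j : Fin 3), v = ε • outerRoot j := by
  unfold IsStronglyOrthogonal at horth
  revert v
  decide +kernel

theorem exists_smul_outerRoot_eq_units_smul (g : stabilizer autD4 highestRoot) (i : Fin 3) :
    ∃ (ε : ℤˣ) (j : Fin 3), g • outerRoot i = ε • outerRoot j := by
  have hroot : ∀ i, outerRoot i ∈ roots := by decide +kernel
  have horth : ∀ i, IsStronglyOrthogonal roots highestRoot (outerRoot i) := by
    unfold IsStronglyOrthogonal
    decide +kernel
  have hg : g • roots = roots := smul_roots g.1.2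
  refine exists_eq_units_smul_outerRoot (hg ▸ Finset.smul_mem_smul_finset (hroot i)) ?_
  have := (horth i).smul hg
  rwa [show g • highestRoot = highestRoot from g.2] at this

theorem eq_one_of_forall_smul_outerRoot_eq {g : stabilizer autD4 highestRoot}
    (hg : ∀ i, g • outerRoot i = outerRoot i) : g = 1 := by
  have hdet : (of (vecCons highestRoot outerRoot)).det ≠ 0 := by decide +kernel
  have hunit := (isUnit_iff_isUnit_det _).mpr hdet.isUnit
  exact Subtype.ext (Subtype.ext (eq_one_of_forall_smul_eq hunit (Fin.cases g.2 hg)))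

theorem card_stabilizer_highestRoot :
    Nat.card (stabilizer autD4 highestRoot) = 2 ^ 3 * 3 ! := by
  have hdistinct : Injective fun p : ℤˣ × Fin 3 ↦ p.1 • outerRoot p.2 := by decide +kernel
  have hfull (ε : Fin 3 → ℤˣ) (σ : Perm (Fin 3)) :
      ∃ g : stabilizer autD4 highestRoot, ∀ i, g • outerRoot i = ε i • outerRoot (σ i) := by
    obtain ⟨g, hg⟩ := exists_forall_smul_outerRoot_eq_units_smul (ε ∘ σ.symm)
    obtain ⟨g', hg'⟩ := exists_forall_smul_outerRoot_eq_apply_perm σ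
    exact ⟨g * g', fun i ↦ by simp [mul_smul, hg', hg]⟩
  rw [card_eq_card_pow_mul_factorial_of_monomial hdistinct
    (fun _ ↦ eq_one_of_forall_smul_outerRoot_eq) exists_smul_outerRoot_eq_units_smul hfull]
  simp

theorem card_eq : Nat.card autD4 = 24 * (2 ^ 3 * 3 !) := by
  rw [← (stabilizer autD4 highestRoot).index_mul_card, index_stabilizer, orbit_highestRoot,
    Set.ncard_coe_finset, card_roots, card_stabilizer_highestRoot]

end autD4

/-- The automorphism group `V` of the root system of type `D₄`, generated inside
`GL(4,ℚ)` by `s₁, …, s₆`, is finite of cardinality `1152 = 2⁷·3²`. -/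
theorem autD4_card (u₁ u₂ u₃ u₄ u₅ u₆ : GL (Fin 4) ℚ)
    (h₁ : (u₁ : Matrix (Fin 4) (Fin 4) ℚ) = s1)
    (h₂ : (u₂ : Matrix (Fin 4) (Fin 4) ℚ) = s2)
    (h₃ : (u₃ : Matrix (Fin 4) (Fin 4) ℚ) = s3)
    (h₄ : (u₄ : Matrix (Fin 4) (Fin 4) ℚ) = s4)
    (h₅ : (u₅ : Matrix (Fin 4) (Fin 4) ℚ) = s5)
    (h₆ : (u₆ : Matrix (Fin 4) (Fin 4) ℚ) = s6) :
    Nat.card (Subgroup.closure {u₁, u₂, u₃, u₄, u₅, u₆} : Subgroup (GL (Fin 4) ℚ))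
      = 1152 ∧ (1152 : ℕ) = 2 ^ 7 * 3 ^ 2 := by
  obtain rfl : u₁ = gen 0 := Units.ext h₁
  obtain rfl : u₂ = gen 1 := Units.ext h₂
  obtain rfl : u₃ = gen 2 := Units.ext h₃
  obtain rfl : u₄ = gen 3 := Units.ext h₄
  obtain rfl : u₅ = gen 4 := Units.ext h₅
  obtain rfl : u₆ = gen 5 := Units.ext h₆
  have hrange : {gen 0, gen 1, gen 2, gen 3, gen 4, gen 5} = Set.range gen := by
    ext g
    simp [Fin.exists_fin_succ, eq_comm]
  refine ⟨?_, by norm_num⟩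
  rw [hrange]
  exact autD4.card_eq
end

section
/- In the group V, every element has order belonging to {1, 2, 3, 4, 6, 8, 12}, and the number of elements of order 2 is 139, of order 3 is 80, of order 4 is 228, of order 6 is 464, of order 8 is 144, and of order 12 is 96. -/
/-!
An integer matrix preserves the Cartan form of `D₄` exactly when its rows are roots whose Gram
matrix is the Cartan matrix, so the isometries of the root lattice form an explicit finite list.

The matrices `sᵢ` generate all of them. Let `w` be a point of the open fundamental chamber and `δ`
the sum of the positive roots. If the isometry `A` does not map `w` to a dominant point, then some
`(A w)ᵢ` is negative and the `i`-th simple reflection raises the height `δ · A w`, which cannot go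
on forever; and an isometry mapping `w` to a dominant point is a diagram automorphism.

If moreover `w` is fixed by no nontrivial diagram automorphism, then its stabilizer is trivial, so
the order of `A` is the length of the orbit of `w` under `A`, which is read off from the list.
-/

section Group

variable {G G' : Type*} [Group G] [Group G']

theorem subgroup_le_of_forall_exists_lt {α : Type*} [Preorder α] {H K : Subgroup G}
    (hH : (H : Set G).Finite) (height : G → α)
    (hlt : ∀ g ∈ H, g ∉ K → ∃ s ∈ H ⊓ K, height g < height (s * g)) : H ≤ K := by
  by_contra hHK
  obtain ⟨g₀, hg₀⟩ := SetLike.not_le_iff_exists.mp hHK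
  obtain ⟨g, ⟨hgH, hgK⟩, hmax⟩ := (hH.sdiff (t := K)).exists_maximalFor height _ ⟨g₀, hg₀⟩
  obtain ⟨s, ⟨hsH, hsK⟩, hs⟩ := hlt g hgH hgK
  have hsg : s * g ∈ (H : Set G) \ K :=
    ⟨H.mul_mem hsH hgH, fun h ↦ hgK ((K.mul_mem_cancel_left hsK).mp h)⟩
  exact hs.not_ge (hmax hsg hs.le)

theorem card_mem_map_and_orderOf_eq {φ : G →* G'} (hφ : Function.Injective φ) (H : Subgroup G)
    (k : ℕ) :
    Nat.card {g // g ∈ H.map φ ∧ orderOf g = k} = Nat.card {h // h ∈ H ∧ orderOf h = k} := by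
  have himage : {g | g ∈ H.map φ ∧ orderOf g = k} = φ '' {h | h ∈ H ∧ orderOf h = k} := by
    ext g
    constructor
    · rintro ⟨⟨h, hh, rfl⟩, hk⟩
      exact ⟨h, ⟨hh, (orderOf_injective φ hφ h).symm.trans hk⟩, rfl⟩
    · rintro ⟨h, ⟨hh, hk⟩, rfl⟩
      exact ⟨⟨h, hh, rfl⟩, (orderOf_injective φ hφ h).trans hk⟩
  exact (congrArg (fun s : Set G' ↦ Nat.card s) himage).trans (Nat.card_image_of_injective hφ _)

end Group

section Period

open Function

theorem orderOf_eq_period_of_forall_pow_smul_eq {M α : Type*} [Monoid M] [MulAction M α]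
    {m : M} {a : α} (h : ∀ n : ℕ, m ^ n • a = a → m ^ n = 1) :
    orderOf m = MulAction.period m a :=
  (orderOf_dvd_of_pow_eq_one (h _ (MulAction.pow_period_smul m a))).antisymm
    (MulAction.period_dvd_orderOf m a)

theorem minimalPeriod_eq_iff_find?_eq_some {α : Type*} [DecidableEq α] {f : α → α} {x : α} {k : ℕ}
    (hk : 0 < k) :
    minimalPeriod f x = k ↔ (List.range' 1 k).find? (fun i ↦ f^[i] x = x) = some k := by
  simp only [List.find?_range'_eq_some, List.mem_range'_1, decide_eq_true_eq, Bool.not_eq_true',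
    decide_eq_false_iff_not]
  constructor
  · rintro rfl
    exact ⟨iterate_minimalPeriod, by lia, fun i hi hlt ↦
      not_isPeriodicPt_of_pos_of_lt_minimalPeriod (by lia) hlt⟩
  · rintro ⟨hper, -, hlt⟩
    refine (IsPeriodicPt.minimalPeriod_le hk hper).eq_of_not_lt fun hlt' ↦ ?_
    exact hlt _ (IsPeriodicPt.minimalPeriod_pos hk hper) hlt' iterate_minimalPeriod

instance decidableMinimalPeriodEq {α : Type*} [DecidableEq α] (f : α → α) (x : α) (k : ℕ)
    [NeZero k] : Decidable (minimalPeriod f x = k) :=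
  decidable_of_iff' _ (minimalPeriod_eq_iff_find?_eq_some (NeZero.pos k))

end Period

section GramTuples

variable {V R : Type*} [DecidableEq R]

/-- The tuples `v` with `v i ∈ S i` such that `B (v i) (v j) = C i j` for all `i < j`. They are
listed by backtracking: once `v 0` is chosen, the candidates for the later entries are filtered. -/
def gramTuples (B : V → V → R) :
    {n : ℕ} → Matrix (Fin n) (Fin n) R → (Fin n → Finset V) → Finset (Fin n → V)
  | 0, _, _ => {![]}
  | _ + 1, C, S =>
    ((S 0).sigma fun v ↦ gramTuples B (C.submatrix Fin.succ Fin.succ)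
      fun j ↦ (S j.succ).filter (B v · = C 0 j.succ)).map
        ((Equiv.sigmaEquivProd _ _).trans (Fin.consEquiv _)).toEmbedding

theorem mem_gramTuples {B : V → V → R} {n : ℕ} {C : Matrix (Fin n) (Fin n) R}
    {S : Fin n → Finset V} {v : Fin n → V} :
    v ∈ gramTuples B C S ↔ (∀ i, v i ∈ S i) ∧ ∀ i j, i < j → B (v i) (v j) = C i j := by
  induction n with
  | zero => simp [gramTuples, Subsingleton.elim v ![]]
  | succ n ih =>
    obtain ⟨v₀, v, rfl⟩ : ∃ v₀ v', v = Fin.cons v₀ v' :=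
      ⟨v 0, Fin.tail v, (Fin.cons_self_tail v).symm⟩
    have hcons : Fin.cons v₀ v ∈ gramTuples B C S ↔ v₀ ∈ S 0 ∧
        v ∈ gramTuples B (C.submatrix Fin.succ Fin.succ)
          fun j ↦ (S j.succ).filter (B v₀ · = C 0 j.succ) := by
      simp [gramTuples, Fin.consEquiv]
    simp only [hcons, ih, Fin.forall_fin_succ, Finset.mem_filter, forall_and, Fin.cons_zero,
      Fin.cons_succ, Matrix.submatrix_apply, Fin.succ_lt_succ_iff, Fin.succ_pos, forall_const,
      Fin.not_lt_zero, IsEmpty.forall_iff, true_and]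
    tauto

attribute [irreducible] gramTuples

end GramTuples

section Isometry

open Matrix

variable {n R : Type*} [Fintype n] [DecidableEq n] [CommRing R]

/-- The group of invertible matrices whose rows have the Gram matrix `C` for the bilinear form
with matrix `C`; a matrix acts on row vectors from the right. -/
def isometryGroup (C : Matrix n n R) : Subgroup (GL n R) where
  carrier := {g | (g : Matrix n n R) * C * (g : Matrix n n R)ᵀ = C}
  one_mem' := by simp
  mul_mem' {g h} hg hh := by
    calc (g * h : Matrix n n R) * C * (g * h : Matrix n n R)ᵀ
        = (g : Matrix n n R) * (h * C * (h : Matrix n n R)ᵀ) * (g : Matrix n n R)ᵀ := by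
          simp only [transpose_mul, Matrix.mul_assoc]
      _ = C := by rw [hh, hg]
  inv_mem' {g} hg := by
    have hinv : ((g⁻¹ : GL n R) : Matrix n n R) * g = 1 := g.inv_mul
    calc ((g⁻¹ : GL n R) : Matrix n n R) * C * ((g⁻¹ : GL n R) : Matrix n n R)ᵀ
        = (g⁻¹ : GL n R) * (g * C * (g : Matrix n n R)ᵀ) * ((g⁻¹ : GL n R) : Matrix n n R)ᵀ := by
          rw [hg]
      _ = ((g⁻¹ : GL n R) * g : Matrix n n R) * C * ((g⁻¹ : GL n R) * g : Matrix n n R)ᵀ := by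
          simp only [transpose_mul, Matrix.mul_assoc]
      _ = C := by simp only [hinv, transpose_one, Matrix.one_mul, Matrix.mul_one]

theorem mem_isometryGroup {C : Matrix n n R} {g : GL n R} :
    g ∈ isometryGroup C ↔ (g : Matrix n n R) * C * (g : Matrix n n R)ᵀ = C :=
  Iff.rfl

theorem isUnit_of_mul_mul_transpose_eq [IsDomain R] {A C : Matrix n n R} (hC : C.det ≠ 0)
    (hA : A * C * Aᵀ = C) : IsUnit A := by
  have hdet : A.det * A.det * C.det = 1 * C.det := by
    calc A.det * A.det * C.det = (A * C * Aᵀ).det := by simp only [det_mul, det_transpose]; ring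
      _ = 1 * C.det := by rw [hA, one_mul]
  rw [isUnit_iff_isUnit_det]
  exact .of_mul_eq_one _ (mul_right_cancel₀ hC hdet)

/-- The matrix of the `i`-th simple reflection of a root system with Cartan matrix `C`, acting
from the right on coordinate rows with respect to the simple roots. -/
def simpleReflection (C : Matrix n n R) (i : n) : Matrix n n R :=
  1 - vecMulVec (C.col i) (Pi.single i 1)

variable {C : Matrix n n R} {i : n}

theorem simpleReflection_mulVec (x : n → R) :
    simpleReflection C i *ᵥ x = x - x i • C.col i := by
  simp [simpleReflection, sub_mulVec, vecMulVec_mulVec]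

theorem simpleReflection_pow_two (hi : C i i = 2) : simpleReflection C i ^ 2 = 1 := by
  set P := vecMulVec (C.col i) (Pi.single i 1) with hP
  have hPP : P * P = (2 : R) • P := by
    rw [hP, vecMulVec_mul_vecMulVec, single_one_dotProduct, col_apply, hi, vecMulVec_smul]
  calc (1 - P) ^ 2 = 1 - P - P + P * P := by noncomm_ring
    _ = 1 := by
      rw [hPP]
      module

theorem dotProduct_simpleReflection_mulVec (y x : n → R) :
    y ⬝ᵥ (simpleReflection C i *ᵥ x) = y ⬝ᵥ x - (y ᵥ* C) i * x i := by
  rw [simpleReflection_mulVec, dotProduct_sub, dotProduct_smul, smul_eq_mul, mul_comm (x i)]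
  rfl

theorem simpleReflection_mul_mul_transpose (hC : C.IsSymm) (hi : C i i = 2) :
    simpleReflection C i * C * (simpleReflection C i)ᵀ = C := by
  set P := vecMulVec (C.col i) (Pi.single i 1) with hP
  set Q := vecMulVec (C.col i) (C.col i) with hQ
  have hPC : P * C = Q := by
    have hrow : C.row i = C.col i := congrFun (congrArg row hC.eq.symm) i
    rw [hP, vecMulVec_mul, single_one_vecMul, hrow]
  have hCP : C * Pᵀ = Q := by
    rw [← transpose_inj, transpose_mul, transpose_transpose, hC.eq, hPC, hQ, transpose_vecMulVec]
  have hPCP : P * C * Pᵀ = (2 : R) • Q := by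
    rw [Matrix.mul_assoc, hCP, hP, hQ, vecMulVec_mul_vecMulVec, single_one_dotProduct, col_apply,
      hi, vecMulVec_smul]
  calc (1 - P) * C * (1 - P)ᵀ = C - P * C - C * Pᵀ + P * C * Pᵀ := by
        rw [transpose_sub, transpose_one]
        noncomm_ring
    _ = C := by
        rw [hPCP, hPC, hCP]
        module

/-- Permutation matrices as elements of the general linear group. -/
def permGL (n R : Type*) [Fintype n] [DecidableEq n] [CommRing R] : Equiv.Perm n →* GL n R :=
  permMatrixHom.toHomUnits

theorem permGL_mem_isometryGroup {σ : Equiv.Perm n} (hσ : C.submatrix σ σ = C) :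
    permGL n R σ ∈ isometryGroup C := by
  have hcoe : (permGL n R σ : Matrix n n R) = σ⁻¹.permMatrix R := rfl
  rw [mem_isometryGroup, hcoe, transpose_permMatrix, inv_inv,
    PEquiv.toMatrix_toPEquiv_mul, PEquiv.mul_toMatrix_toPEquiv]
  ext j k
  simpa using (congrFun₂ hσ (σ⁻¹ j) (σ⁻¹ k)).symm

end Isometry

section RootSystem

open Matrix CartanMatrix Finset Function

/-- The roots of `D₄`, that is, the vectors of norm 2 in the root lattice, in coordinates with
respect to the simple roots (the second one is the central node of the Dynkin diagram). The bound 2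
on the coefficients, which holds for every root, makes them enumerable. -/
noncomputable def d4Roots : Finset (Fin 4 → ℤ) :=
  {v ∈ Fintype.piFinset fun _ ↦ Icc (-2) 2 | v ⬝ᵥ CartanMatrix.D 4 *ᵥ v = 2}

/-- The isometries of the root lattice of `D₄`, listed as the tuples of roots whose Gram matrix is
the Cartan matrix. -/
noncomputable def d4Isometries : Finset (Matrix (Fin 4) (Fin 4) ℤ) :=
  gramTuples (fun v w ↦ v ⬝ᵥ CartanMatrix.D 4 *ᵥ w) (CartanMatrix.D 4) fun _ ↦ d4Roots

/-- A point, given by its values on the simple roots, in the open fundamental chamber; the values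
on the three outer nodes are distinct, so no nontrivial diagram automorphism fixes it. -/
def chamberPoint : Fin 4 → ℤ := ![1, 1, 2, 3]

theorem two_mul_dotProduct_D_four_mulVec (v : Fin 4 → ℤ) :
    2 * (v ⬝ᵥ CartanMatrix.D 4 *ᵥ v) =
      (2 * v 0 - v 1) ^ 2 + (2 * v 2 - v 1) ^ 2 + (2 * v 3 - v 1) ^ 2 + v 1 ^ 2 := by
  simp only [D_four, dotProduct, mulVec, of_apply, Fin.sum_univ_four, Matrix.cons_val]
  ring

theorem mem_d4Roots {v : Fin 4 → ℤ} : v ∈ d4Roots ↔ v ⬝ᵥ CartanMatrix.D 4 *ᵥ v = 2 := by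
  rw [d4Roots, mem_filter, and_iff_right_iff_imp]
  intro hv
  have hsq := two_mul_dotProduct_D_four_mulVec v
  rw [hv] at hsq
  have h0 := abs_le_of_sq_le_sq' (a := 2 * v 0 - v 1) (b := 2) (by nlinarith) zero_le_two
  have h1 := abs_le_of_sq_le_sq' (a := v 1) (b := 2) (by nlinarith) zero_le_two
  have h2 := abs_le_of_sq_le_sq' (a := 2 * v 2 - v 1) (b := 2) (by nlinarith) zero_le_two
  have h3 := abs_le_of_sq_le_sq' (a := 2 * v 3 - v 1) (b := 2) (by nlinarith) zero_le_two
  refine Fintype.mem_piFinset.mpr fun i ↦ mem_Icc.mpr ?_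
  match i with
  | 0 | 1 | 2 | 3 => omega

theorem mem_d4Isometries {A : Matrix (Fin 4) (Fin 4) ℤ} :
    A ∈ d4Isometries ↔ A * CartanMatrix.D 4 * Aᵀ = CartanMatrix.D 4 := by
  have hentry (i j : Fin 4) :
      (A * CartanMatrix.D 4 * Aᵀ) i j = A i ⬝ᵥ CartanMatrix.D 4 *ᵥ A j :=
    mul_mul_apply ..
  have hsymm (i j : Fin 4) :
      A j ⬝ᵥ CartanMatrix.D 4 *ᵥ A i = A i ⬝ᵥ CartanMatrix.D 4 *ᵥ A j := by
    rw [dotProduct_mulVec, ← mulVec_transpose, D_transpose, dotProduct_comm]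
  refine mem_gramTuples.trans ?_
  simp only [← Matrix.ext_iff, mem_d4Roots, hentry]
  refine ⟨fun ⟨hdiag, hlt⟩ i j ↦ ?_,
    fun h ↦ ⟨fun i ↦ (h i i).trans (D_diag 4 i), fun i j _ ↦ h i j⟩⟩
  rcases lt_trichotomy i j with hij | rfl | hij
  · exact hlt i j hij
  · exact (hdiag i).trans (D_diag 4 i).symm
  · rw [← hsymm, hlt j i hij, (D_isSymm 4).apply]

theorem eq_one_of_mulVec_chamberPoint_eq :
    ∀ A ∈ d4Isometries, A *ᵥ chamberPoint = chamberPoint → A = 1 := by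
  decide +kernel

/-- The rotation of the three outer nodes of the Dynkin diagram of `D₄`. -/
def triality : Equiv.Perm (Fin 4) := c[0, 3, 2]

/-- The exchange of the last two nodes of the Dynkin diagram of `D₄`. -/
def outerSwap : Equiv.Perm (Fin 4) := Equiv.swap 2 3

theorem eq_diagramAut_of_mulVec_chamberPoint_nonneg :
    ∀ A ∈ d4Isometries, (∀ i, 0 ≤ (A *ᵥ chamberPoint) i) →
      ∃ (j : Fin 3) (k : Fin 2), A = permMatrixHom (triality ^ (j : ℕ) * outerSwap ^ (k : ℕ)) := by
  decide +kernel

theorem minimalPeriod_chamberPoint :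
    (∀ A ∈ d4Isometries,
      minimalPeriod (A *ᵥ ·) chamberPoint = 1 ∨ minimalPeriod (A *ᵥ ·) chamberPoint = 2 ∨
      minimalPeriod (A *ᵥ ·) chamberPoint = 3 ∨ minimalPeriod (A *ᵥ ·) chamberPoint = 4 ∨
      minimalPeriod (A *ᵥ ·) chamberPoint = 6 ∨ minimalPeriod (A *ᵥ ·) chamberPoint = 8 ∨
      minimalPeriod (A *ᵥ ·) chamberPoint = 12) ∧
    #{A ∈ d4Isometries | minimalPeriod (A *ᵥ ·) chamberPoint = 2} = 139 ∧
    #{A ∈ d4Isometries | minimalPeriod (A *ᵥ ·) chamberPoint = 3} = 80 ∧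
    #{A ∈ d4Isometries | minimalPeriod (A *ᵥ ·) chamberPoint = 4} = 228 ∧
    #{A ∈ d4Isometries | minimalPeriod (A *ᵥ ·) chamberPoint = 6} = 464 ∧
    #{A ∈ d4Isometries | minimalPeriod (A *ᵥ ·) chamberPoint = 8} = 144 ∧
    #{A ∈ d4Isometries | minimalPeriod (A *ᵥ ·) chamberPoint = 12} = 96 := by
  -- The kernel evaluates the written-out sums much faster than sums over `Fin 4`.
  unfold mulVec dotProduct
  simp only [Fin.sum_univ_four]
  decide +kernel

theorem orderOf_eq_minimalPeriod_chamberPoint {g : GL (Fin 4) ℤ}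
    (hg : g ∈ isometryGroup (CartanMatrix.D 4)) :
    orderOf g = minimalPeriod ((g : Matrix (Fin 4) (Fin 4) ℤ) *ᵥ ·) chamberPoint :=
  orderOf_eq_period_of_forall_pow_smul_eq fun n hn ↦ Units.ext <|
    eq_one_of_mulVec_chamberPoint_eq _ (mem_d4Isometries.mpr (pow_mem hg n)) hn

theorem image_val_isometryGroup_D_four :
    Units.val '' (isometryGroup (CartanMatrix.D 4) : Set (GL (Fin 4) ℤ)) = d4Isometries := by
  have hdet : (CartanMatrix.D 4).det ≠ 0 := by decide +kernel
  ext A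
  constructor
  · rintro ⟨g, hg, rfl⟩
    exact mem_d4Isometries.mpr hg
  · intro hA
    have hA := mem_d4Isometries.mp hA
    exact ⟨(isUnit_of_mul_mul_transpose_eq hdet hA).unit, hA, rfl⟩

theorem finite_isometryGroup_D_four :
    (isometryGroup (CartanMatrix.D 4) : Set (GL (Fin 4) ℤ)).Finite :=
  .of_finite_image (image_val_isometryGroup_D_four ▸ d4Isometries.finite_toSet)
    Units.val_injective.injOn

/-- The `i`-th simple reflection of `D₄`, as an automorphism of the root lattice. -/
def d4Reflection (i : Fin 4) : GL (Fin 4) ℤ :=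
  Units.ofPowEqOne (simpleReflection (CartanMatrix.D 4) i) 2
    (simpleReflection_pow_two (D_diag 4 i)) two_ne_zero

/-- The simple reflections and two generators of the group of diagram automorphisms of `D₄`. -/
def d4Generators : Set (GL (Fin 4) ℤ) :=
  {d4Reflection 0, d4Reflection 1, d4Reflection 2, d4Reflection 3, permGL _ _ triality,
    permGL _ _ outerSwap}

theorem d4Reflection_mem_d4Generators (i : Fin 4) : d4Reflection i ∈ d4Generators := by
  fin_cases i <;> simp [d4Generators]

theorem d4Generators_subset_isometryGroup :
    d4Generators ⊆ isometryGroup (CartanMatrix.D 4) := by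
  have hrefl (i : Fin 4) : d4Reflection i ∈ isometryGroup (CartanMatrix.D 4) :=
    simpleReflection_mul_mul_transpose (D_isSymm 4) (D_diag 4 i)
  have htriality : permGL _ _ triality ∈ isometryGroup (CartanMatrix.D 4) :=
    permGL_mem_isometryGroup (by decide +kernel)
  have houterSwap : permGL _ _ outerSwap ∈ isometryGroup (CartanMatrix.D 4) :=
    permGL_mem_isometryGroup (by decide +kernel)
  simp [d4Generators, Set.insert_subset_iff, hrefl, htriality, houterSwap]

theorem closure_d4Generators :
    Subgroup.closure d4Generators = isometryGroup (CartanMatrix.D 4) := by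
  refine le_antisymm ((Subgroup.closure_le _).mpr d4Generators_subset_isometryGroup) ?_
  -- the sum of the positive roots
  let δ : Fin 4 → ℤ := ![6, 10, 6, 6]
  have hδ : δ ᵥ* CartanMatrix.D 4 = 2 := by decide +kernel
  refine subgroup_le_of_forall_exists_lt finite_isometryGroup_D_four
    (fun g ↦ δ ⬝ᵥ ((g : Matrix (Fin 4) (Fin 4) ℤ) *ᵥ chamberPoint)) fun g hg hgen ↦ ?_
  obtain ⟨i, hi⟩ : ∃ i, ((g : Matrix (Fin 4) (Fin 4) ℤ) *ᵥ chamberPoint) i < 0 := by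
    by_contra! hnonneg
    obtain ⟨j, k, hjk⟩ :=
      eq_diagramAut_of_mulVec_chamberPoint_nonneg _ (mem_d4Isometries.mpr hg) hnonneg
    have hg_eq : g = permGL _ _ triality ^ (j : ℕ) * permGL _ _ outerSwap ^ (k : ℕ) := by
      rw [← map_pow, ← map_pow, ← map_mul]
      exact Units.ext hjk
    rw [hg_eq] at hgen
    exact hgen (mul_mem (pow_mem (Subgroup.subset_closure (by simp [d4Generators])) _)
      (pow_mem (Subgroup.subset_closure (by simp [d4Generators])) _))
  refine ⟨d4Reflection i,
    ⟨d4Generators_subset_isometryGroup (d4Reflection_mem_d4Generators i),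
      Subgroup.subset_closure (d4Reflection_mem_d4Generators i)⟩, ?_⟩
  have hcoe : ((d4Reflection i * g : GL (Fin 4) ℤ) : Matrix (Fin 4) (Fin 4) ℤ) =
    simpleReflection (CartanMatrix.D 4) i * g := rfl
  rw [hcoe, ← mulVec_mulVec, dotProduct_simpleReflection_mulVec, hδ, Pi.ofNat_apply]
  linarith

theorem card_orderOf_isometryGroup_D_four (k : ℕ) [NeZero k] :
    Nat.card {g : GL (Fin 4) ℤ // g ∈ isometryGroup (CartanMatrix.D 4) ∧ orderOf g = k} =
      #{A ∈ d4Isometries | minimalPeriod (A *ᵥ ·) chamberPoint = k} := by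
  have himage : Units.val '' {g : GL (Fin 4) ℤ |
      g ∈ isometryGroup (CartanMatrix.D 4) ∧ orderOf g = k} =
      {A ∈ d4Isometries | minimalPeriod (A *ᵥ ·) chamberPoint = k} := by
    ext A
    simp only [coe_filter, Set.mem_ofPred_eq, ← mem_coe, ← image_val_isometryGroup_D_four]
    constructor
    · rintro ⟨g, ⟨hg, hk⟩, rfl⟩
      exact ⟨⟨g, hg, rfl⟩, (orderOf_eq_minimalPeriod_chamberPoint hg).symm.trans hk⟩
    · rintro ⟨⟨g, hg, rfl⟩, hk⟩
      exact ⟨g, ⟨hg, (orderOf_eq_minimalPeriod_chamberPoint hg).trans hk⟩, rfl⟩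
  rw [← Set.ncard_coe_finset, ← himage,
    Set.ncard_image_of_injective _ Units.val_injective]
  rfl

end RootSystem

section BaseChange

open Matrix

theorem map_isometryGroup_D_four {u₁ u₂ u₃ u₄ u₅ u₆ : GL (Fin 4) ℚ}
    (h₁ : (u₁ : Matrix (Fin 4) (Fin 4) ℚ) = s1) (h₂ : (u₂ : Matrix (Fin 4) (Fin 4) ℚ) = s2)
    (h₃ : (u₃ : Matrix (Fin 4) (Fin 4) ℚ) = s3) (h₄ : (u₄ : Matrix (Fin 4) (Fin 4) ℚ) = s4)
    (h₅ : (u₅ : Matrix (Fin 4) (Fin 4) ℚ) = s5) (h₆ : (u₆ : Matrix (Fin 4) (Fin 4) ℚ) = s6) :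
    (isometryGroup (CartanMatrix.D 4)).map (GeneralLinearGroup.map (Int.castRingHom ℚ)) =
      Subgroup.closure {u₁, u₂, u₃, u₄, u₅, u₆} := by
  have hrefl (i : Fin 4) {u : GL (Fin 4) ℚ}
      (hu : (simpleReflection (CartanMatrix.D 4) i).map (↑) = (u : Matrix (Fin 4) (Fin 4) ℚ)) :
      GeneralLinearGroup.map (Int.castRingHom ℚ) (d4Reflection i) = u :=
    Units.ext hu
  have hperm (σ : Equiv.Perm (Fin 4)) {u : GL (Fin 4) ℚ}
      (hu : (σ⁻¹.permMatrix ℤ).map (↑) = (u : Matrix (Fin 4) (Fin 4) ℚ)) :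
      GeneralLinearGroup.map (Int.castRingHom ℚ) (permGL _ _ σ) = u :=
    Units.ext hu
  have hu₁ := hrefl 0 (u := u₁) (by rw [h₁]; decide +kernel)
  have hu₂ := hrefl 1 (u := u₂) (by rw [h₂]; decide +kernel)
  have hu₃ := hrefl 2 (u := u₃) (by rw [h₃]; decide +kernel)
  have hu₄ := hrefl 3 (u := u₄) (by rw [h₄]; decide +kernel)
  have hu₅ := hperm triality (u := u₅) (by rw [h₅]; decide +kernel)
  have hu₆ := hperm outerSwap (u := u₆) (by rw [h₆]; decide +kernel)
  rw [← closure_d4Generators, MonoidHom.map_closure, d4Generators]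
  simp only [Set.image_insert_eq, Set.image_singleton, hu₁, hu₂, hu₃, hu₄, hu₅, hu₆]

end BaseChange

/-- Orders of elements in the automorphism group `V` of the root system `D₄`:
every element has order in `{1,2,3,4,6,8,12}`, and the numbers of elements of order
`2, 3, 4, 6, 8, 12` are `139, 80, 228, 464, 144, 96` respectively. -/
theorem autD4_element_orders (u₁ u₂ u₃ u₄ u₅ u₆ : GL (Fin 4) ℚ)
    (h₁ : (u₁ : Matrix (Fin 4) (Fin 4) ℚ) = s1)
    (h₂ : (u₂ : Matrix (Fin 4) (Fin 4) ℚ) = s2)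
    (h₃ : (u₃ : Matrix (Fin 4) (Fin 4) ℚ) = s3)
    (h₄ : (u₄ : Matrix (Fin 4) (Fin 4) ℚ) = s4)
    (h₅ : (u₅ : Matrix (Fin 4) (Fin 4) ℚ) = s5)
    (h₆ : (u₆ : Matrix (Fin 4) (Fin 4) ℚ) = s6) :
    (∀ g ∈ (Subgroup.closure {u₁, u₂, u₃, u₄, u₅, u₆} : Subgroup (GL (Fin 4) ℚ)),
      orderOf g ∈ ({1, 2, 3, 4, 6, 8, 12} : Set ℕ)) ∧
    Nat.card {g : GL (Fin 4) ℚ //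
      g ∈ Subgroup.closure {u₁, u₂, u₃, u₄, u₅, u₆} ∧ orderOf g = 2} = 139 ∧
    Nat.card {g : GL (Fin 4) ℚ //
      g ∈ Subgroup.closure {u₁, u₂, u₃, u₄, u₅, u₆} ∧ orderOf g = 3} = 80 ∧
    Nat.card {g : GL (Fin 4) ℚ //
      g ∈ Subgroup.closure {u₁, u₂, u₃, u₄, u₅, u₆} ∧ orderOf g = 4} = 228 ∧
    Nat.card {g : GL (Fin 4) ℚ //
      g ∈ Subgroup.closure {u₁, u₂, u₃, u₄, u₅, u₆} ∧ orderOf g = 6} = 464 ∧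
    Nat.card {g : GL (Fin 4) ℚ //
      g ∈ Subgroup.closure {u₁, u₂, u₃, u₄, u₅, u₆} ∧ orderOf g = 8} = 144 ∧
    Nat.card {g : GL (Fin 4) ℚ //
      g ∈ Subgroup.closure {u₁, u₂, u₃, u₄, u₅, u₆} ∧ orderOf g = 12} = 96 := by
  have hinj : Function.Injective (Matrix.GeneralLinearGroup.map (n := Fin 4) (Int.castRingHom ℚ)) :=
    Units.map_injective (Matrix.map_injective Int.cast_injective)
  obtain ⟨horder, hcard⟩ := minimalPeriod_chamberPoint
  rw [← map_isometryGroup_D_four h₁ h₂ h₃ h₄ h₅ h₆]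
  constructor
  · rintro _ ⟨g, hg, rfl⟩
    rw [orderOf_injective _ hinj, orderOf_eq_minimalPeriod_chamberPoint hg]
    exact horder g (mem_d4Isometries.mpr hg)
  · simpa only [card_mem_map_and_orderOf_eq hinj, card_orderOf_isometryGroup_D_four] using hcard
end

section
/- In the group V, the elements of order 2 form exactly 7 conjugacy classes, the elements of order 3 form exactly 3 conjugacy classes, the elements of order 4 form exactly 5 conjugacy classes, the elements of order 6 form exactly 7 conjugacy classes, the elements of order 8 form exactly 1 conjugacy class, and the elements of order 12 form exactly 1 conjugacy class. -/
/-!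
The roots of `D₄` can be taken to be the `24` Hurwitz units in the rational quaternions. The
reflection in a unit `r` is `x ↦ -r * star x * r`, and with `ν = j - k`, which normalizes the
Hurwitz units and has central square, every automorphism of the root system is
`x ↦ (a * ν ^ m) * x * (b * ν ^ m)⁻¹` or the same map applied to `star x`, where `a` and `b` are
Hurwitz units and `m < 2`. Conjugation by such maps moves the pair `(a * ν ^ m, b * ν ^ m)` within a
pair of conjugacy classes or, in the presence of `star`, makes `b = 1`, and this leaves `25`
candidates. They are told apart by their orders and by how many of the short roots of the root
system `F₄ ⊃ D₄` (those of `D₄`) and of the long ones they fix and negate.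
-/

open Quaternion
open scoped Finset Pointwise

namespace AutD4

section ConjClasses

variable {G G' ι : Type*} [Group G] [Group G']

theorem card_conjClasses_orderOf (r : ι → G) (hsurj : ∀ g, ∃ i, IsConj g (r i))
    (hinj : ∀ i j, IsConj (r i) (r j) → i = j) (n : ℕ) :
    Nat.card {c : ConjClasses G // ∃ g, c = ConjClasses.mk g ∧ orderOf g = n} =
      Nat.card {i // orderOf (r i) = n} := by
  refine (Nat.card_congr (Equiv.ofBijective
    (fun i => ⟨ConjClasses.mk (r i.1), r i.1, rfl, i.2⟩) ⟨?_, ?_⟩)).symm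
  · intro i j hij
    exact Subtype.ext (hinj _ _ (ConjClasses.mk_eq_mk_iff_isConj.1 (congrArg Subtype.val hij)))
  · rintro ⟨_, g, rfl, hg⟩
    obtain ⟨i, hi⟩ := hsurj g
    obtain ⟨h, hh⟩ := isConj_iff.1 hi
    refine ⟨⟨i, ?_⟩, Subtype.ext (ConjClasses.mk_eq_mk_iff_isConj.2 hi.symm)⟩
    rw [← hh, ← hg]
    exact (MulAut.conj h).orderOf_eq g

theorem isConj_map_mulEquiv (e : G ≃* G') {a b : G} : IsConj (e a) (e b) ↔ IsConj a b :=
  ⟨fun h => by simpa using e.symm.toMonoidHom.map_isConj h, e.toMonoidHom.map_isConj⟩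

theorem card_conjClasses_orderOf_congr (e : G ≃* G') (n : ℕ) :
    Nat.card {c : ConjClasses G // ∃ g, c = ConjClasses.mk g ∧ orderOf g = n} =
      Nat.card {c : ConjClasses G' // ∃ g, c = ConjClasses.mk g ∧ orderOf g = n} := by
  refine Nat.card_congr ((Quotient.congr e.toEquiv
    fun _ _ => (isConj_map_mulEquiv e).symm).subtypeEquiv ?_)
  refine ConjClasses.forall_isConj.2 fun a => ⟨?_, ?_⟩
  · rintro ⟨g, hg, rfl⟩
    exact ⟨e g, ConjClasses.mk_eq_mk_iff_isConj.2 ((isConj_map_mulEquiv e).2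
      (ConjClasses.mk_eq_mk_iff_isConj.1 hg)), e.orderOf_eq g⟩
  · rintro ⟨g, hg, rfl⟩
    refine ⟨e.symm g, ConjClasses.mk_eq_mk_iff_isConj.2 ((isConj_map_mulEquiv e).1 ?_),
      e.symm.orderOf_eq g⟩
    rw [e.apply_symm_apply]
    exact ConjClasses.mk_eq_mk_iff_isConj.1 hg

/-- Conjugacy of two elements of `G` by an element of the subgroup `H`. -/
def IsConjBy (H : Subgroup G) (a b : G) : Prop := ∃ h ∈ H, h * a * h⁻¹ = b

namespace IsConjBy

variable {H : Subgroup G} {a b c : G}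

theorem trans : IsConjBy H a b → IsConjBy H b c → IsConjBy H a c := by
  rintro ⟨h, hh, rfl⟩ ⟨k, hk, rfl⟩
  exact ⟨k * h, mul_mem hk hh, by group⟩

theorem of_mul_eq_mul {h : G} (hh : h ∈ H) (hab : h * a = b * h) : IsConjBy H a b :=
  ⟨h, hh, mul_inv_eq_of_eq_mul hab⟩

theorem isConj_iff {a b : H} : IsConj a b ↔ IsConjBy H (a : G) b := by
  simp [_root_.isConj_iff, IsConjBy, Subtype.ext_iff]

end IsConjBy

end ConjClasses

section Eigenvectors

variable {R M : Type*} [CommRing R] [AddCommGroup M] [Module R M] [DecidableEq M]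

/-- The number of vectors `x` in `S` with `g x = c • x`. -/
def eigenCount (S : Finset M) (c : R) (g : M ≃ₗ[R] M) : ℕ := #{x ∈ S | g x = c • x}

theorem eigenCount_conj {S : Finset M} {h : M ≃ₗ[R] M} (hS : h • S = S) (c : R)
    (g : M ≃ₗ[R] M) : eigenCount S c (h * g * h⁻¹) = eigenCount S c g := by
  have himage : S.image h = S := hS
  rw [eigenCount]
  nth_rw 1 [← himage]
  rw [Finset.filter_image, Finset.card_image_of_injective _ h.injective, eigenCount]
  simp only [LinearEquiv.mul_apply, LinearEquiv.coe_inv, LinearEquiv.symm_apply_apply,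
    ← map_smul, h.injective.eq_iff]

end Eigenvectors

section TwoSided

variable (R : Type*) {A : Type*} [CommRing R] [Ring A] [Algebra R A]

/-- The action of pairs of units by two-sided multiplication, `(a, b)` being sent to
`x ↦ a * x * b⁻¹`. -/
def twoSidedMul : Aˣ × Aˣ →* (A ≃ₗ[R] A) where
  toFun u :=
    { toFun := fun x => u.1 * x * ↑u.2⁻¹
      invFun := fun x => ↑u.1⁻¹ * x * u.2
      map_add' := fun x y => by simp only [mul_add, add_mul]
      map_smul' := fun c x => by simp
      left_inv := fun x => by simp [mul_assoc]
      right_inv := fun x => by simp [mul_assoc] }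
  map_one' := by ext; simp
  map_mul' u w := by ext; simp [mul_assoc]

@[simp]
theorem twoSidedMul_apply (u : Aˣ × Aˣ) (x : A) : twoSidedMul R u x = u.1 * x * ↑u.2⁻¹ := rfl

end TwoSided

section Quaternion

variable {R : Type*} [CommRing R]

instance [DecidableEq R] : DecidableEq ℍ[R] := fun _ _ =>
  decidable_of_iff _ Quaternion.ext_iff.symm

/-- The standard basis `1, i, j, k` of the quaternions, as a family which, unlike
`QuaternionAlgebra.basisOneIJK`, reduces to explicit quaternions. -/
def stdBasis (n : Fin 4) : ℍ[R] := (Quaternion.equivTuple R).symm (Pi.single n 1)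

theorem ext_iff_stdBasis {f g : ℍ[R] ≃ₗ[R] ℍ[R]} : f = g ↔ ∀ n, f (stdBasis n) = g (stdBasis n) :=
  ⟨fun h _ => h ▸ rfl, fun h => by
    refine (QuaternionAlgebra.basisOneIJK (-1 : R) 0 (-1)).ext' fun n => ?_
    simp only [QuaternionAlgebra.basisOneIJK, Module.Basis.coe_ofEquivFun]
    exact h n⟩

instance [DecidableEq R] : DecidableEq (ℍ[R] ≃ₗ[R] ℍ[R]) := fun _ _ =>
  decidable_of_iff _ ext_iff_stdBasis.symm

variable (R) in
/-- Quaternion conjugation as an `R`-linear automorphism. -/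
def conj : ℍ[R] ≃ₗ[R] ℍ[R] :=
  Quaternion.starAe.toLinearEquiv.trans (MulOpposite.opLinearEquiv R).symm

@[simp]
theorem conj_apply (x : ℍ[R]) : conj R x = star x := rfl

theorem conj_mul_twoSidedMul {a b : ℍ[R]ˣ} (h : normSq (a : ℍ[R]) = normSq (b : ℍ[R])) :
    conj R * twoSidedMul R (a, b) = twoSidedMul R (b, a) * conj R := by
  have ha : star (a : ℍ[R]) = ((normSq (a : ℍ[R]) : R) : ℍ[R]) * ↑a⁻¹ := by
    rw [← star_mul_self, Units.mul_inv_cancel_right]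
  have hb : star (↑b⁻¹ : ℍ[R]) * ((normSq (b : ℍ[R]) : R) : ℍ[R]) = b := by
    rw [← star_mul_self, ← mul_assoc, ← star_mul, Units.mul_inv, star_one, one_mul]
  ext1 x
  calc
    star (a * x * ↑b⁻¹ : ℍ[R])
      = star (↑b⁻¹ : ℍ[R]) * (star x * ((normSq (b : ℍ[R]) : R) : ℍ[R])) * ↑a⁻¹ := by
        simp only [star_mul, ha, h, mul_assoc]
    _ = b * star x * ↑a⁻¹ := by rw [← coe_commutes, ← mul_assoc, hb]

end Quaternion

section HurwitzUnits

/-- The quaternion `i` as a unit. -/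
def qi : ℍ[ℚ]ˣ :=
  ⟨⟨0, 1, 0, 0⟩, ⟨0, -1, 0, 0⟩, by decide +kernel, by decide +kernel⟩

/-- The quaternion `j` as a unit. -/
def qj : ℍ[ℚ]ˣ :=
  ⟨⟨0, 0, 1, 0⟩, ⟨0, 0, -1, 0⟩, by decide +kernel, by decide +kernel⟩

/-- The quaternion `k` as a unit. -/
def qk : ℍ[ℚ]ˣ :=
  ⟨⟨0, 0, 0, 1⟩, ⟨0, 0, 0, -1⟩, by decide +kernel, by decide +kernel⟩

/-- The quaternion `(1 + i + j + k) / 2`, a Hurwitz unit of order `6`. -/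
def ω : ℍ[ℚ]ˣ :=
  ⟨⟨1/2, 1/2, 1/2, 1/2⟩, ⟨1/2, -1/2, -1/2, -1/2⟩, by decide +kernel, by decide +kernel⟩

/-- The quaternion `j - k`, which normalizes the Hurwitz units and inverts `i` and `ω`. -/
def ν : ℍ[ℚ]ˣ :=
  ⟨⟨0, 0, 1, -1⟩, ⟨0, 0, -1/2, 1/2⟩, by decide +kernel, by decide +kernel⟩

/-- The `24` Hurwitz units (the binary tetrahedral group). -/
def hurwitz : Subgroup ℍ[ℚ]ˣ := Subgroup.closure {qi, ω}

/-- The Hurwitz unit `± q * ω ^ c` with `q ∈ {1, i, j, k}` and `c ∈ {0, 1, -1}`; every Hurwitz unit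
has this form. -/
def word (x : Fin 2 × Fin 4 × Fin 3) : ℍ[ℚ]ˣ :=
  ![1, -1] x.1 * ![1, qi, qj, qk] x.2.1 * ![1, ω, ω⁻¹] x.2.2

theorem qi_mem_hurwitz : qi ∈ hurwitz := Subgroup.subset_closure (Or.inl rfl)

theorem ω_mem_hurwitz : ω ∈ hurwitz := Subgroup.subset_closure (Or.inr rfl)

theorem qj_mem_hurwitz : qj ∈ hurwitz := by
  rw [show qj = ω * qi * ω⁻¹ by decide +kernel]
  exact mul_mem (mul_mem ω_mem_hurwitz qi_mem_hurwitz) (inv_mem ω_mem_hurwitz)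

theorem qk_mem_hurwitz : qk ∈ hurwitz := by
  rw [show qk = qi * qj by decide +kernel]
  exact mul_mem qi_mem_hurwitz qj_mem_hurwitz

theorem neg_one_mem_hurwitz : -1 ∈ hurwitz := by
  rw [show (-1 : ℍ[ℚ]ˣ) = qi * qi by decide +kernel]
  exact mul_mem qi_mem_hurwitz qi_mem_hurwitz

theorem neg_mem_hurwitz {a : ℍ[ℚ]ˣ} (ha : a ∈ hurwitz) : -a ∈ hurwitz := by
  rw [← neg_one_mul]
  exact mul_mem neg_one_mem_hurwitz ha

theorem word_mem_hurwitz (x : Fin 2 × Fin 4 × Fin 3) : word x ∈ hurwitz := by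
  obtain ⟨s, q, c⟩ := x
  refine mul_mem (mul_mem ?_ ?_) ?_
  · fin_cases s
    exacts [one_mem _, neg_one_mem_hurwitz]
  · fin_cases q
    exacts [one_mem _, qi_mem_hurwitz, qj_mem_hurwitz, qk_mem_hurwitz]
  · fin_cases c
    exacts [one_mem _, ω_mem_hurwitz, inv_mem ω_mem_hurwitz]

theorem exists_word_eq {a : ℍ[ℚ]ˣ} (ha : a ∈ hurwitz) : ∃ x, word x = a := by
  have step : ∀ x, (∃ y, word y = qi * word x) ∧ (∃ y, word y = qi⁻¹ * word x) ∧
      (∃ y, word y = ω * word x) ∧ ∃ y, word y = ω⁻¹ * word x := by decide +kernel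
  induction ha using Subgroup.closure_induction_left with
  | one => exact ⟨0, by decide +kernel⟩
  | mul_left g hg _ _ ih =>
    obtain ⟨x, rfl⟩ := ih
    rcases hg with rfl | rfl
    exacts [(step x).1, (step x).2.2.1]
  | inv_mul_cancel g hg _ _ ih =>
    obtain ⟨x, rfl⟩ := ih
    rcases hg with rfl | rfl
    exacts [(step x).2.1, (step x).2.2.2]

theorem normSq_of_mem_hurwitz {a : ℍ[ℚ]ˣ} (ha : a ∈ hurwitz) : normSq (a : ℍ[ℚ]) = 1 := by
  have h : hurwitz ≤ (Units.map (normSq : ℍ[ℚ] →*₀ ℚ).toMonoidHom).ker := by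
    rw [hurwitz, Subgroup.closure_le]
    rintro _ (rfl | rfl) <;> exact Units.ext (by decide +kernel)
  exact congrArg Units.val (h ha)

theorem star_of_mem_hurwitz {a : ℍ[ℚ]ˣ} (ha : a ∈ hurwitz) : star a = a⁻¹ := by
  refine eq_inv_of_mul_eq_one_left (Units.ext ?_)
  rw [Units.val_mul, Units.coe_star, star_mul_self, normSq_of_mem_hurwitz ha, coe_one,
    Units.val_one]

theorem ν_conj_mem_hurwitz {a : ℍ[ℚ]ˣ} (ha : a ∈ hurwitz) : ν * a * ν⁻¹ ∈ hurwitz := by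
  have h : hurwitz ≤ hurwitz.comap (MulAut.conj ν).toMonoidHom := by
    have hi : ν * qi * ν⁻¹ ∈ hurwitz := by
      rw [show ν * qi * ν⁻¹ = qi⁻¹ by decide +kernel]
      exact inv_mem qi_mem_hurwitz
    have hω : ν * ω * ν⁻¹ ∈ hurwitz := by
      rw [show ν * ω * ν⁻¹ = ω⁻¹ by decide +kernel]
      exact inv_mem ω_mem_hurwitz
    refine (Subgroup.closure_le _).2 ?_
    rintro _ (rfl | rfl)
    exacts [hi, hω]
  exact h ha

theorem ν_pow_conj_mem_hurwitz {a : ℍ[ℚ]ˣ} (ha : a ∈ hurwitz) (m : ℕ) :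
    ν ^ m * a * (ν ^ m)⁻¹ ∈ hurwitz := by
  induction m with
  | zero => simpa using! ha
  | succ m ih =>
    rw [pow_succ', mul_inv_rev]
    simpa only [mul_assoc] using ν_conj_mem_hurwitz ih

/-- Representatives of the conjugacy classes of the Hurwitz units. -/
def hurwitzReps : List ℍ[ℚ]ˣ := [1, -1, ω, -ω, ω⁻¹, -ω⁻¹, qi]

/-- Representatives `a * ν` of the coset of `ν` up to conjugation by Hurwitz units, given by their
Hurwitz factors `a`. -/
def oddReps : List ℍ[ℚ]ˣ := [1, qj, qj⁻¹]

theorem mem_hurwitz_of_mem_hurwitzReps : ∀ a ∈ hurwitzReps, a ∈ hurwitz := by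
  simp only [hurwitzReps, List.forall_mem_cons]
  exact ⟨one_mem _, neg_one_mem_hurwitz, ω_mem_hurwitz, neg_mem_hurwitz ω_mem_hurwitz,
    inv_mem ω_mem_hurwitz, neg_mem_hurwitz (inv_mem ω_mem_hurwitz), qi_mem_hurwitz,
    List.forall_mem_nil _⟩

theorem mem_hurwitz_of_mem_oddReps : ∀ a ∈ oddReps, a ∈ hurwitz := by
  simp only [oddReps, List.forall_mem_cons]
  exact ⟨one_mem _, qj_mem_hurwitz, inv_mem qj_mem_hurwitz, List.forall_mem_nil _⟩

theorem exists_conj_mem_hurwitzReps {a : ℍ[ℚ]ˣ} (ha : a ∈ hurwitz) :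
    ∃ c ∈ hurwitz, ∃ r ∈ hurwitzReps, c * a * c⁻¹ = r := by
  have key : ∀ x, ∃ y, word y * word x * (word y)⁻¹ ∈ hurwitzReps := by decide +kernel
  obtain ⟨x, rfl⟩ := exists_word_eq ha
  obtain ⟨y, hy⟩ := key x
  exact ⟨word y, word_mem_hurwitz y, _, hy, rfl⟩

theorem exists_conj_mul_ν_mem_oddReps {a : ℍ[ℚ]ˣ} (ha : a ∈ hurwitz) :
    ∃ c ∈ hurwitz, ∃ r ∈ oddReps, c * (a * ν) * c⁻¹ = r * ν := by
  have key : ∀ x, ∃ y, word y * (word x * ν) * (word y)⁻¹ ∈ oddReps.map (· * ν) := by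
    decide +kernel
  obtain ⟨x, rfl⟩ := exists_word_eq ha
  obtain ⟨y, hy⟩ := key x
  obtain ⟨r, hr, h⟩ := List.mem_map.1 hy
  exact ⟨word y, word_mem_hurwitz y, r, hr, h.symm⟩

end HurwitzUnits

section AutGroup

local notation "φ" => twoSidedMul ℚ (A := ℍ[ℚ])
local notation "σ" => conj ℚ
local notation "δ" => twoSidedMul ℚ (ν, ν)

/-- The automorphism group of the root system `D₄`, whose roots are the Hurwitz units, as a group of
linear automorphisms of the quaternions. -/
def autGroup : Subgroup (ℍ[ℚ] ≃ₗ[ℚ] ℍ[ℚ]) := Subgroup.closure {φ (qi, 1), φ (ω, 1), δ, σ}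

/-- The linear automorphism `x ↦ a ν ^ m x (b ν ^ m)⁻¹` if `n` is even, and
`x ↦ a ν ^ m (star x) (b ν ^ m)⁻¹` if `n` is odd. -/
def element (a b : ℍ[ℚ]ˣ) (m n : ℕ) : ℍ[ℚ] ≃ₗ[ℚ] ℍ[ℚ] := φ (a * ν ^ m, b * ν ^ m) * σ ^ n

variable {a a' b b' c d : ℍ[ℚ]ˣ}

theorem conj_mul_conj : σ * σ = 1 := LinearEquiv.ext star_star

theorem twoSidedMul_neg (a b : ℍ[ℚ]ˣ) : φ (-a, -b) = φ (a, b) := by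
  ext1 x
  simp

theorem twoSidedMul_ν_sq : φ (ν ^ 2, ν ^ 2) = 1 := by decide +kernel

theorem twoSidedMul_mul_element (c d a b : ℍ[ℚ]ˣ) (m n : ℕ) :
    φ (c, d) * element a b m n = element (c * a) (d * b) m n := by
  rw [element, ← mul_assoc, ← map_mul, Prod.mk_mul_mk, ← mul_assoc, ← mul_assoc, element]

theorem twoSidedMul_ν_mul_element (a b : ℍ[ℚ]ˣ) (m n : ℕ) :
    δ * element a b m n = element (ν * a * ν⁻¹) (ν * b * ν⁻¹) (m + 1) n := by
  rw [twoSidedMul_mul_element]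
  simp only [element, pow_succ', mul_assoc, inv_mul_cancel_left]

theorem conj_mul_element (ha : a ∈ hurwitz) (hb : b ∈ hurwitz) (m n : ℕ) :
    σ * element a b m n = element b a m (n + 1) := by
  have h : normSq ((a * ν ^ m : ℍ[ℚ]ˣ) : ℍ[ℚ]) = normSq ((b * ν ^ m : ℍ[ℚ]ˣ) : ℍ[ℚ]) := by
    simp only [Units.val_mul, map_mul, normSq_of_mem_hurwitz ha, normSq_of_mem_hurwitz hb]
  rw [element, ← mul_assoc, conj_mul_twoSidedMul h, mul_assoc, ← pow_succ', element]

theorem element_mod_two (a b : ℍ[ℚ]ˣ) (m n : ℕ) :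
    element a b m n = element a b (m % 2) (n % 2) := by
  have hν : φ (ν ^ m, ν ^ m) = φ (ν ^ (m % 2), ν ^ (m % 2)) := by
    simpa only [← map_pow, Prod.pow_mk] using
      pow_eq_pow_mod m (by rw [← map_pow, Prod.pow_mk, twoSidedMul_ν_sq] : δ ^ 2 = 1)
  rw [element, ← Prod.mk_mul_mk, map_mul, hν, ← map_mul, Prod.mk_mul_mk,
    pow_eq_pow_mod n ((pow_two σ).trans conj_mul_conj), element]

theorem twoSidedMul_ν_mem_autGroup : δ ∈ autGroup :=
  Subgroup.subset_closure (Or.inr (Or.inr (Or.inl rfl)))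

theorem conj_mem_autGroup : σ ∈ autGroup :=
  Subgroup.subset_closure (Or.inr (Or.inr (Or.inr rfl)))

theorem twoSidedMul_one_mem_autGroup (ha : a ∈ hurwitz) : φ (a, 1) ∈ autGroup := by
  have h : hurwitz ≤ autGroup.comap ((φ).comp (MonoidHom.inl _ _)) := by
    refine (Subgroup.closure_le _).2 ?_
    rintro _ (rfl | rfl)
    exacts [Subgroup.subset_closure (Or.inl rfl), Subgroup.subset_closure (Or.inr (Or.inl rfl))]
  exact h ha

theorem twoSidedMul_mem_autGroup (ha : a ∈ hurwitz) (hb : b ∈ hurwitz) :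
    φ (a, b) ∈ autGroup := by
  have swap : φ (1, b) = σ * φ (b, 1) * σ := by
    rw [conj_mul_twoSidedMul (by rw [normSq_of_mem_hurwitz hb, Units.val_one, map_one]),
      mul_assoc, conj_mul_conj, mul_one]
  rw [← mul_one a, ← one_mul b, ← Prod.mk_mul_mk, map_mul, swap]
  exact mul_mem (twoSidedMul_one_mem_autGroup ha) (mul_mem (mul_mem conj_mem_autGroup
    (twoSidedMul_one_mem_autGroup hb)) conj_mem_autGroup)

theorem element_mem_autGroup (ha : a ∈ hurwitz) (hb : b ∈ hurwitz) (m n : ℕ) :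
    element a b m n ∈ autGroup := by
  rw [element, ← Prod.mk_mul_mk, map_mul, ← Prod.pow_mk, map_pow]
  exact mul_mem (mul_mem (twoSidedMul_mem_autGroup ha hb) (pow_mem twoSidedMul_ν_mem_autGroup m))
    (pow_mem conj_mem_autGroup n)

/-- The automorphisms in normal form; by `exists_element_eq` these make up `autGroup`. -/
def IsElement (g : ℍ[ℚ] ≃ₗ[ℚ] ℍ[ℚ]) : Prop :=
  ∃ a ∈ hurwitz, ∃ b ∈ hurwitz, ∃ m n, element a b m n = g

namespace IsElement

variable {g : ℍ[ℚ] ≃ₗ[ℚ] ℍ[ℚ]}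

theorem one : IsElement 1 :=
  ⟨1, one_mem _, 1, one_mem _, 0, 0, by simp [element, ← Prod.one_eq_mk]⟩

theorem twoSidedMul_mul (hc : c ∈ hurwitz) : IsElement g → IsElement (φ (c, 1) * g) := by
  rintro ⟨a, ha, b, hb, m, n, rfl⟩
  exact ⟨c * a, mul_mem hc ha, 1 * b, mul_mem (one_mem _) hb, m, n,
    (twoSidedMul_mul_element c 1 a b m n).symm⟩

theorem twoSidedMul_ν_mul : IsElement g → IsElement (δ * g) := by
  rintro ⟨a, ha, b, hb, m, n, rfl⟩
  exact ⟨_, ν_conj_mem_hurwitz ha, _, ν_conj_mem_hurwitz hb, m + 1, n,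
    (twoSidedMul_ν_mul_element a b m n).symm⟩

theorem conj_mul : IsElement g → IsElement (σ * g) := by
  rintro ⟨a, ha, b, hb, m, n, rfl⟩
  exact ⟨b, hb, a, ha, m, n + 1, (conj_mul_element ha hb m n).symm⟩

end IsElement

theorem isElement_of_mem_autGroup {g : ℍ[ℚ] ≃ₗ[ℚ] ℍ[ℚ]} (hg : g ∈ autGroup) : IsElement g := by
  have hδ : (δ)⁻¹ = δ := inv_eq_of_mul_eq_one_left (by
    rw [← map_mul, Prod.mk_mul_mk, ← pow_two, twoSidedMul_ν_sq])
  have hσ : (σ)⁻¹ = σ := inv_eq_of_mul_eq_one_left conj_mul_conj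
  induction hg using Subgroup.closure_induction_left with
  | one => exact IsElement.one
  | mul_left f hf _ _ ih =>
    rcases hf with rfl | rfl | rfl | rfl
    exacts [ih.twoSidedMul_mul qi_mem_hurwitz, ih.twoSidedMul_mul ω_mem_hurwitz,
      ih.twoSidedMul_ν_mul, ih.conj_mul]
  | inv_mul_cancel f hf _ _ ih =>
    rcases hf with rfl | rfl | rfl | rfl
    · exact ih.twoSidedMul_mul (inv_mem qi_mem_hurwitz)
    · exact ih.twoSidedMul_mul (inv_mem ω_mem_hurwitz)
    · exact hδ.symm ▸ ih.twoSidedMul_ν_mul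
    · exact hσ.symm ▸ ih.conj_mul

theorem exists_element_eq {g : ℍ[ℚ] ≃ₗ[ℚ] ℍ[ℚ]} (hg : g ∈ autGroup) :
    ∃ a ∈ hurwitz, ∃ b ∈ hurwitz, ∃ m < 2, ∃ n < 2, element a b m n = g := by
  obtain ⟨a, ha, b, hb, m, n, rfl⟩ := isElement_of_mem_autGroup hg
  exact ⟨a, ha, b, hb, m % 2, m.mod_lt two_pos, n % 2, n.mod_lt two_pos,
    (element_mod_two a b m n).symm⟩

/-- The parameters `(a, b, m, n)` of the representatives `element a b m n` of the conjugacy classes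
of `autGroup`. -/
def repParams : Fin 25 → ℍ[ℚ]ˣ × ℍ[ℚ]ˣ × ℕ × ℕ :=
  ![(1, 1, 0, 0), (1, -1, 0, 0), (1, ω, 0, 0), (1, -ω, 0, 0), (ω, ω, 0, 0), (ω, -ω, 0, 0),
    (ω, ω⁻¹, 0, 0), (ω, -ω⁻¹, 0, 0), (qi, 1, 0, 0), (qi, ω, 0, 0), (qi, qi, 0, 0),
    (qj, qj, 1, 0), (qj, qj⁻¹, 1, 0), (qj, 1, 1, 0), (1, 1, 1, 0),
    (1, 1, 0, 1), (-1, 1, 0, 1), (ω, 1, 0, 1), (-ω, 1, 0, 1), (qi, 1, 0, 1),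
    (1, 1, 1, 1), (-1, 1, 1, 1), (ω, 1, 1, 1), (-ω, 1, 1, 1), (qi, 1, 1, 1)]

/-- Representatives of the conjugacy classes of `autGroup`. -/
def rep (i : Fin 25) : ℍ[ℚ] ≃ₗ[ℚ] ℍ[ℚ] :=
  element (repParams i).1 (repParams i).2.1 (repParams i).2.2.1 (repParams i).2.2.2

theorem rep_of_repParams_eq {i : Fin 25} {m n : ℕ} (h : repParams i = (a, b, m, n)) :
    rep i = element a b m n := by
  rw [rep, h]

theorem rep_mem_autGroup (i : Fin 25) : rep i ∈ autGroup := by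
  have key : ∀ i, (repParams i).1 ∈ hurwitzReps ++ oddReps ∧
      (repParams i).2.1 ∈ hurwitzReps ++ oddReps := by decide +kernel
  have mem_hurwitz : ∀ a ∈ hurwitzReps ++ oddReps, a ∈ hurwitz :=
    List.forall_mem_append.2 ⟨mem_hurwitz_of_mem_hurwitzReps, mem_hurwitz_of_mem_oddReps⟩
  exact element_mem_autGroup (mem_hurwitz _ (key i).1) (mem_hurwitz _ (key i).2) _ _

theorem isConjBy_element_swap (ha : a ∈ hurwitz) (hb : b ∈ hurwitz) (m : ℕ) :
    IsConjBy autGroup (element a b m 0) (element b a m 0) := by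
  refine IsConjBy.of_mul_eq_mul conj_mem_autGroup ?_
  rw [conj_mul_element ha hb]
  simp only [element, zero_add, pow_one, pow_zero, mul_one]

theorem isConjBy_element_of_conj_eq (h : φ (c, d) ∈ autGroup) {m : ℕ}
    (ha : c * (a * ν ^ m) * c⁻¹ = a' * ν ^ m) (hb : d * (b * ν ^ m) * d⁻¹ = b' * ν ^ m) :
    IsConjBy autGroup (element a b m 0) (element a' b' m 0) := by
  refine ⟨_, h, ?_⟩
  simp only [element, pow_zero, mul_one, ← map_inv, ← map_mul, Prod.inv_mk, Prod.mk_mul_mk, ha, hb]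

theorem element_sign_mul {s : ℍ[ℚ]ˣ} (hs : s ∈ [1, -1]) (a b : ℍ[ℚ]ˣ) (m n : ℕ) :
    element (s * a) (s * b) m n = element a b m n := by
  rcases List.mem_pair.1 hs with rfl | rfl
  · simp only [one_mul]
  · simp only [element, neg_mul, one_mul, twoSidedMul_neg]

theorem sign_mul_mem_hurwitz {s : ℍ[ℚ]ˣ} (hs : s ∈ [1, -1]) (ha : a ∈ hurwitz) :
    s * a ∈ hurwitz := by
  rcases List.mem_pair.1 hs with rfl | rfl
  exacts [mul_mem (one_mem _) ha, mul_mem neg_one_mem_hurwitz ha]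

theorem exists_isConjBy_rep_of_even (ha : a ∈ hurwitz) (hb : b ∈ hurwitz) :
    ∃ i, IsConjBy autGroup (element a b 0 0) (rep i) := by
  have key : ∀ r ∈ hurwitzReps, ∀ t ∈ hurwitzReps, ∃ d ∈ [1, ν], ∃ p ∈ [1, qj], ∃ s ∈ [1, -1],
      ∃ i, repParams i = (p * d * (s * r) * (p * d)⁻¹, d * (s * t) * d⁻¹, 0, 0) ∨
        repParams i = (p * d * (s * t) * (p * d)⁻¹, d * (s * r) * d⁻¹, 0, 0) := by decide +kernel
  obtain ⟨c, hc, r, hr, hcr⟩ := exists_conj_mem_hurwitzReps ha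
  obtain ⟨e, he, t, ht, het⟩ := exists_conj_mem_hurwitzReps hb
  obtain ⟨d, hd, p, hp, s, hs, i, hi⟩ := key r hr t ht
  have hrt : IsConjBy autGroup (element a b 0 0) (element r t 0 0) :=
    isConjBy_element_of_conj_eq (twoSidedMul_mem_autGroup hc he)
      (by rw [pow_zero, mul_one, mul_one, hcr]) (by rw [pow_zero, mul_one, mul_one, het])
  have hpd : φ (p * d, d) ∈ autGroup := by
    have hp' : p ∈ hurwitz := by
      rcases List.mem_pair.1 hp with rfl | rfl
      exacts [one_mem _, qj_mem_hurwitz]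
    have hd' : φ (d, d) ∈ autGroup := by
      rcases List.mem_pair.1 hd with rfl | rfl
      exacts [twoSidedMul_mem_autGroup (one_mem _) (one_mem _), twoSidedMul_ν_mem_autGroup]
    rw [show (p * d, d) = (p, 1) * (d, d) by rw [Prod.mk_mul_mk, one_mul], map_mul]
    exact mul_mem (twoSidedMul_one_mem_autGroup hp') hd'
  have hconj (x y : ℍ[ℚ]ˣ) : IsConjBy autGroup (element x y 0 0)
      (element (p * d * x * (p * d)⁻¹) (d * y * d⁻¹) 0 0) :=
    isConjBy_element_of_conj_eq hpd (by simp only [pow_zero, mul_one])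
      (by simp only [pow_zero, mul_one])
  refine ⟨i, hrt.trans ?_⟩
  rw [← element_sign_mul hs]
  rcases hi with hi | hi <;> rw [rep_of_repParams_eq hi]
  · exact hconj _ _
  · exact (isConjBy_element_swap
      (sign_mul_mem_hurwitz hs (mem_hurwitz_of_mem_hurwitzReps r hr))
      (sign_mul_mem_hurwitz hs (mem_hurwitz_of_mem_hurwitzReps t ht)) 0).trans (hconj _ _)

theorem exists_isConjBy_rep_of_odd (ha : a ∈ hurwitz) (hb : b ∈ hurwitz) :
    ∃ i, IsConjBy autGroup (element a b 1 0) (rep i) := by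
  have key : ∀ r ∈ oddReps, ∀ t ∈ oddReps, ∃ p ∈ [1, qi], ∃ s ∈ [1, -1],
      ∃ i, repParams i = (s * r, p * (s * t * ν) * p⁻¹ * ν⁻¹, 1, 0) ∨
        repParams i = (s * t, p * (s * r * ν) * p⁻¹ * ν⁻¹, 1, 0) := by decide +kernel
  obtain ⟨c, hc, r, hr, hcr⟩ := exists_conj_mul_ν_mem_oddReps ha
  obtain ⟨e, he, t, ht, het⟩ := exists_conj_mul_ν_mem_oddReps hb
  obtain ⟨p, hp, s, hs, i, hi⟩ := key r hr t ht
  have hrt : IsConjBy autGroup (element a b 1 0) (element r t 1 0) :=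
    isConjBy_element_of_conj_eq (twoSidedMul_mem_autGroup hc he)
      (by rw [pow_one, hcr]) (by rw [pow_one, het])
  have hconj (x y : ℍ[ℚ]ˣ) : IsConjBy autGroup (element x y 1 0)
      (element x (p * (y * ν) * p⁻¹ * ν⁻¹) 1 0) := by
    have hp' : p ∈ hurwitz := by
      rcases List.mem_pair.1 hp with rfl | rfl
      exacts [one_mem _, qi_mem_hurwitz]
    exact isConjBy_element_of_conj_eq (twoSidedMul_mem_autGroup (one_mem _) hp')
      (by rw [one_mul, inv_one, mul_one]) (by rw [pow_one, inv_mul_cancel_right])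
  refine ⟨i, hrt.trans ?_⟩
  rw [← element_sign_mul hs]
  rcases hi with hi | hi <;> rw [rep_of_repParams_eq hi]
  · exact hconj _ _
  · exact (isConjBy_element_swap
      (sign_mul_mem_hurwitz hs (mem_hurwitz_of_mem_oddReps r hr))
      (sign_mul_mem_hurwitz hs (mem_hurwitz_of_mem_oddReps t ht)) 1).trans (hconj _ _)

theorem commute_ν_pow_mul_ν_pow (a : ℍ[ℚ]ˣ) (m : ℕ) : Commute a (ν ^ m * ν ^ m) := by
  have hν : ((ν * ν : ℍ[ℚ]ˣ) : ℍ[ℚ]) = ((-2 : ℚ) : ℍ[ℚ]) := by decide +kernel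
  have h : Commute a (ν * ν) := Units.ext (by
    rw [Units.val_mul, hν, Units.val_mul, hν]
    exact (Rat.cast_commute (-2) _).symm)
  rw [← (Commute.refl ν).mul_pow]
  exact h.pow_right m

theorem element_one_mul_twoSidedMul (hc : c ∈ hurwitz) (hd : d ∈ hurwitz) (a b : ℍ[ℚ]ˣ) (m : ℕ) :
    element a b m 1 * φ (c, d) =
      element (a * (ν ^ m * d * (ν ^ m)⁻¹)) (b * (ν ^ m * c * (ν ^ m)⁻¹)) m 1 := by
  have h : normSq (c : ℍ[ℚ]) = normSq (d : ℍ[ℚ]) := by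
    rw [normSq_of_mem_hurwitz hc, normSq_of_mem_hurwitz hd]
  simp only [element, pow_one]
  rw [mul_assoc, conj_mul_twoSidedMul h, ← mul_assoc, ← map_mul, Prod.mk_mul_mk]
  simp only [mul_assoc, inv_mul_cancel, mul_one]

theorem isConjBy_element_one (a : ℍ[ℚ]ˣ) (hb : b ∈ hurwitz) (m : ℕ) :
    IsConjBy autGroup (element a b m 1) (element (a * (ν ^ m * b * (ν ^ m)⁻¹)) 1 m 1) := by
  refine IsConjBy.of_mul_eq_mul (twoSidedMul_mem_autGroup (one_mem _) (inv_mem hb)) ?_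
  rw [twoSidedMul_mul_element, element_one_mul_twoSidedMul (one_mem _) (inv_mem hb)]
  congr 1 <;> group

theorem isConjBy_element_conj (hc : c ∈ hurwitz) (a : ℍ[ℚ]ˣ) (m : ℕ) :
    IsConjBy autGroup (element a 1 m 1) (element (c * a * c⁻¹) 1 m 1) := by
  have hd := ν_pow_conj_mem_hurwitz hc m
  have hcc : ν ^ m * (ν ^ m * c * (ν ^ m)⁻¹) * (ν ^ m)⁻¹ = c := by
    simpa only [mul_assoc, mul_inv_rev] using (commute_ν_pow_mul_ν_pow c m).symm.mul_inv_cancel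
  refine IsConjBy.of_mul_eq_mul (twoSidedMul_mem_autGroup hc hd) ?_
  rw [twoSidedMul_mul_element, element_one_mul_twoSidedMul hc hd, hcc, inv_mul_cancel_right,
    mul_one, one_mul]

theorem isConjBy_element_ν_conj (a : ℍ[ℚ]ˣ) (m : ℕ) :
    IsConjBy autGroup (element a 1 m 1) (element (ν * a * ν⁻¹) 1 m 1) := by
  refine IsConjBy.of_mul_eq_mul twoSidedMul_ν_mem_autGroup ?_
  rw [twoSidedMul_ν_mul_element, mul_one, mul_inv_cancel]
  simp only [element, pow_one]
  rw [mul_assoc (φ _), conj_mul_twoSidedMul rfl, ← mul_assoc, ← map_mul, Prod.mk_mul_mk]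
  simp only [mul_assoc, pow_succ]

theorem exists_isConjBy_rep_of_twisted (ha : a ∈ hurwitz) (hb : b ∈ hurwitz) {m : ℕ} (hm : m < 2) :
    ∃ i, IsConjBy autGroup (element a b m 1) (rep i) := by
  have key : ∀ r ∈ hurwitzReps, ∀ m < 2, ∃ i, repParams i = (r, 1, m, 1) ∨
      repParams i = (ν * r * ν⁻¹, 1, m, 1) := by decide +kernel
  obtain ⟨c, hc, r, hr, hcr⟩ :=
    exists_conj_mem_hurwitzReps (mul_mem ha (ν_pow_conj_mem_hurwitz hb m))
  obtain ⟨i, hi⟩ := key r hr m hm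
  refine ⟨i, (isConjBy_element_one a hb m).trans
    ((isConjBy_element_conj hc _ m).trans ?_)⟩
  rw [hcr]
  rcases hi with hi | hi <;> rw [rep_of_repParams_eq hi]
  · exact ⟨1, one_mem _, by rw [one_mul, inv_one, mul_one]⟩
  · exact isConjBy_element_ν_conj r m

theorem exists_isConjBy_rep {g : ℍ[ℚ] ≃ₗ[ℚ] ℍ[ℚ]} (hg : g ∈ autGroup) :
    ∃ i, IsConjBy autGroup g (rep i) := by
  obtain ⟨a, ha, b, hb, m, hm, n, hn, rfl⟩ := exists_element_eq hg
  interval_cases n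
  · interval_cases m
    exacts [exists_isConjBy_rep_of_even ha hb, exists_isConjBy_rep_of_odd ha hb]
  · exact exists_isConjBy_rep_of_twisted ha hb hm

/-- The vectors `a * ν ^ m` with `a` a Hurwitz unit: for `m = 0` the roots of `D₄`, for `m = 1` the
remaining roots of the root system `F₄` containing them. -/
def roots (m : ℕ) : Finset ℍ[ℚ] :=
  Finset.univ.image fun x => ((word x * ν ^ m : ℍ[ℚ]ˣ) : ℍ[ℚ])

theorem mem_roots {m : ℕ} {x : ℍ[ℚ]} :
    x ∈ roots m ↔ ∃ a ∈ hurwitz, ((a * ν ^ m : ℍ[ℚ]ˣ) : ℍ[ℚ]) = x := by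
  simp only [roots, Finset.mem_image, Finset.mem_univ, true_and]
  constructor
  · rintro ⟨y, rfl⟩
    exact ⟨word y, word_mem_hurwitz y, rfl⟩
  · rintro ⟨a, ha, rfl⟩
    obtain ⟨y, rfl⟩ := exists_word_eq ha
    exact ⟨y, rfl⟩

theorem star_mul_ν_pow (ha : a ∈ hurwitz) (m : ℕ) :
    star (a * ν ^ m) = (-1) ^ m * (ν ^ m * a⁻¹ * (ν ^ m)⁻¹) * ν ^ m := by
  rw [star_mul, star_pow, star_of_mem_hurwitz ha, show star ν = -ν by decide +kernel, neg_pow]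
  simp only [mul_assoc, inv_mul_cancel, mul_one]

theorem smul_roots {g : ℍ[ℚ] ≃ₗ[ℚ] ℍ[ℚ]} (hg : g ∈ autGroup) (m : ℕ) : g • roots m = roots m := by
  have hmul {c : ℍ[ℚ]ˣ} (hc : c ∈ hurwitz) : φ (c, 1) ∈ MulAction.stabilizer _ (roots m) := by
    refine MulAction.mem_stabilizer_finset'.2 fun x hx => ?_
    obtain ⟨a, ha, rfl⟩ := mem_roots.1 hx
    exact mem_roots.2 ⟨c * a, mul_mem hc ha, by simp [mul_assoc]⟩
  have hν : δ ∈ MulAction.stabilizer _ (roots m) := by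
    refine MulAction.mem_stabilizer_finset'.2 fun x hx => ?_
    obtain ⟨a, ha, rfl⟩ := mem_roots.1 hx
    refine mem_roots.2 ⟨ν * a * ν⁻¹, ν_conj_mem_hurwitz ha, ?_⟩
    rw [LinearEquiv.smul_def, twoSidedMul_apply, ← Units.val_mul, ← Units.val_mul]
    simp only [mul_assoc, ← (Commute.refl ν).inv_left.pow_right m |>.eq]
  have hconj : σ ∈ MulAction.stabilizer _ (roots m) := by
    refine MulAction.mem_stabilizer_finset'.2 fun x hx => ?_
    obtain ⟨a, ha, rfl⟩ := mem_roots.1 hx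
    refine mem_roots.2 ⟨_, mul_mem (pow_mem neg_one_mem_hurwitz m)
      (ν_pow_conj_mem_hurwitz (inv_mem ha) m), ?_⟩
    rw [← star_mul_ν_pow ha, Units.coe_star, LinearEquiv.smul_def, conj_apply]
  have h : autGroup ≤ MulAction.stabilizer _ (roots m) := by
    refine (Subgroup.closure_le _).2 ?_
    rintro _ (rfl | rfl | rfl | rfl)
    exacts [hmul qi_mem_hurwitz, hmul ω_mem_hurwitz, hν, hconj]
  exact h hg

/-- The order of `g` and the numbers of vectors in `roots 0` and `roots 1` fixed and negated by
`g`, which together determine the conjugacy class of `g` in `autGroup`. -/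
noncomputable def signature (g : ℍ[ℚ] ≃ₗ[ℚ] ℍ[ℚ]) : ℕ × ℕ × ℕ × ℕ × ℕ :=
  (orderOf g, eigenCount (roots 0) 1 g, eigenCount (roots 0) (-1) g,
    eigenCount (roots 1) 1 g, eigenCount (roots 1) (-1) g)

theorem signature_eq_of_isConjBy {f g : ℍ[ℚ] ≃ₗ[ℚ] ℍ[ℚ]} (h : IsConjBy autGroup f g) :
    signature f = signature g := by
  obtain ⟨k, hk, rfl⟩ := h
  have horder : orderOf (k * f * k⁻¹) = orderOf f := (MulAut.conj k).orderOf_eq f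
  simp only [signature, horder, eigenCount_conj (smul_roots hk _)]

/-- The signatures of the representatives `rep`. -/
def repSignature : Fin 25 → ℕ × ℕ × ℕ × ℕ × ℕ :=
  ![(1, 24, 0, 24, 0), (2, 0, 24, 0, 24), (6, 0, 0, 0, 0), (3, 0, 0, 0, 0), (3, 6, 0, 0, 0),
    (6, 0, 6, 0, 0), (3, 0, 0, 6, 0), (6, 0, 0, 0, 6), (4, 0, 0, 0, 0), (12, 0, 0, 0, 0),
    (2, 4, 4, 4, 4), (4, 4, 0, 4, 0), (4, 0, 4, 0, 4), (8, 0, 0, 0, 0), (2, 2, 2, 2, 2),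
    (2, 2, 6, 0, 12), (2, 6, 2, 12, 0), (6, 0, 2, 0, 0), (6, 2, 0, 0, 0), (4, 0, 0, 2, 2),
    (2, 12, 0, 6, 2), (2, 0, 12, 2, 6), (6, 0, 0, 2, 0), (6, 0, 0, 0, 2), (4, 2, 2, 0, 0)]

theorem repSignature_injective : Function.Injective repSignature := by decide

theorem orderOf_rep (i : Fin 25) : orderOf (rep i) = (repSignature i).1 := by
  have key : ∀ i, 0 < (repSignature i).1 ∧ (repSignature i).1 ∣ 2 ^ 3 * 3 ∧
      rep i ^ (repSignature i).1 = 1 ∧ ∀ p ∈ [2, 3], p ∣ (repSignature i).1 →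
        rep i ^ ((repSignature i).1 / p) ≠ 1 := by decide +kernel
  obtain ⟨hpos, hdvd, hpow, hprime⟩ := key i
  refine orderOf_eq_of_pow_and_pow_div_prime hpos hpow fun p hp hpi => hprime p ?_ hpi
  rcases hp.dvd_mul.1 (hpi.trans hdvd) with h | h
  · exact List.mem_pair.2 (.inl ((Nat.prime_dvd_prime_iff_eq hp Nat.prime_two).1
      (hp.dvd_of_dvd_pow h)))
  · exact List.mem_pair.2 (.inr ((Nat.prime_dvd_prime_iff_eq hp Nat.prime_three).1 h))

theorem signature_rep (i : Fin 25) : signature (rep i) = repSignature i := by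
  have key₀ : ∀ i, eigenCount (roots 0) 1 (rep i) = (repSignature i).2.1 ∧
      eigenCount (roots 0) (-1) (rep i) = (repSignature i).2.2.1 := by decide +kernel
  have key₁ : ∀ i, eigenCount (roots 1) 1 (rep i) = (repSignature i).2.2.2.1 ∧
      eigenCount (roots 1) (-1) (rep i) = (repSignature i).2.2.2.2 := by decide +kernel
  rw [signature, orderOf_rep, (key₀ i).1, (key₀ i).2, (key₁ i).1, (key₁ i).2]

theorem card_conjClasses_autGroup (n : ℕ) :
    Nat.card {c : ConjClasses autGroup // ∃ g, c = ConjClasses.mk g ∧ orderOf g = n} =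
      #{i | (repSignature i).1 = n} := by
  have hsurj (g : autGroup) : ∃ i, IsConj g ⟨rep i, rep_mem_autGroup i⟩ := by
    obtain ⟨i, hi⟩ := exists_isConjBy_rep g.2
    exact ⟨i, IsConjBy.isConj_iff.2 hi⟩
  have hinj (i j : Fin 25)
      (h : IsConj (⟨rep i, rep_mem_autGroup i⟩ : autGroup) ⟨rep j, rep_mem_autGroup j⟩) :
      i = j := by
    apply repSignature_injective
    rw [← signature_rep, ← signature_rep, signature_eq_of_isConjBy (IsConjBy.isConj_iff.1 h)]
  rw [card_conjClasses_orderOf _ hsurj hinj, Nat.card_eq_fintype_card, Fintype.card_subtype]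
  simp only [Subgroup.orderOf_mk, orderOf_rep]

/-- The reflection `x ↦ -r * star x * r` in the hyperplane orthogonal to a Hurwitz unit `r`. -/
def rootReflection (r : ℍ[ℚ]ˣ) : ℍ[ℚ] ≃ₗ[ℚ] ℍ[ℚ] := φ (r, -r⁻¹) * σ

theorem rootReflection_mem_autGroup (ha : a ∈ hurwitz) : rootReflection a ∈ autGroup :=
  mul_mem (twoSidedMul_mem_autGroup ha (neg_mem_hurwitz (inv_mem ha))) conj_mem_autGroup

theorem autGroup_le {G : Subgroup (ℍ[ℚ] ≃ₗ[ℚ] ℍ[ℚ])} (hi : rootReflection qi ∈ G)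
    (hω : rootReflection ω ∈ G) (hj : rootReflection qj ∈ G) (hk : rootReflection qk ∈ G)
    (hωω : (φ (ω, ω))⁻¹ ∈ G) (hνσ : δ * σ ∈ G) : autGroup ≤ G := by
  have hσ : σ ∈ G := by
    rw [show σ = rootReflection qi * rootReflection qj * rootReflection qk by decide +kernel]
    exact mul_mem (mul_mem hi hj) hk
  have hδ : δ ∈ G := by
    simpa only [mul_assoc, conj_mul_conj, mul_one] using mul_mem hνσ hσ
  have hii : φ (qi, qi) ∈ G := by
    rw [show φ (qi, qi) = rootReflection qi * σ by decide +kernel]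
    exact mul_mem hi hσ
  have hω1 : φ (ω, 1) ∈ G := by
    rw [show φ (ω, 1) = σ * ((φ (ω, ω))⁻¹ * rootReflection ω) by decide +kernel]
    exact mul_mem hσ (mul_mem hωω hω)
  have hi1 : φ (qi, 1) ∈ G := by
    rw [show φ (qi, 1) = (φ (ω, 1))⁻¹ * (φ (qi, qi) * (φ (ω, 1))⁻¹ * (φ (qi, qi))⁻¹) *
      φ (ω, 1) ^ 2 by decide +kernel]
    exact mul_mem (mul_mem (inv_mem hω1) (mul_mem (mul_mem hii (inv_mem hω1)) (inv_mem hii)))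
      (pow_mem hω1 2)
  refine (Subgroup.closure_le _).2 ?_
  rintro _ (rfl | rfl | rfl | rfl)
  exacts [hi1, hω1, hδ, hσ]

theorem closure_rootReflection_eq_autGroup :
    Subgroup.closure {rootReflection qi, rootReflection ω, rootReflection qj, rootReflection qk,
      (φ (ω, ω))⁻¹, δ * σ} = autGroup := by
  refine le_antisymm ((Subgroup.closure_le _).2 ?_) ?_
  · rintro _ (rfl | rfl | rfl | rfl | rfl | rfl)
    exacts [rootReflection_mem_autGroup qi_mem_hurwitz, rootReflection_mem_autGroup ω_mem_hurwitz,
      rootReflection_mem_autGroup qj_mem_hurwitz, rootReflection_mem_autGroup qk_mem_hurwitz,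
      inv_mem (twoSidedMul_mem_autGroup ω_mem_hurwitz ω_mem_hurwitz),
      mul_mem twoSidedMul_ν_mem_autGroup conj_mem_autGroup]
  · apply autGroup_le <;> exact Subgroup.subset_closure (by
      simp only [Set.mem_insert_iff, Set.mem_singleton_iff, true_or, or_true])

/-- Twice the fundamental weights of `D₄` for the simple roots `i, -ω, j, k`; the matrices
`s1, …, s6` describe root system automorphisms with respect to this basis. -/
def weight : Fin 4 → ℍ[ℚ] := ![⟨-1, 1, 0, 0⟩, ⟨-2, 0, 0, 0⟩, ⟨-1, 0, 1, 0⟩, ⟨-1, 0, 0, 1⟩]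

theorem linearIndependent_weight : LinearIndependent ℚ weight := by
  refine Fintype.linearIndependent_iff.2 fun c hc => ?_
  rw [Fin.sum_univ_four] at hc
  have hre : c 0 * -1 + c 1 * -2 + c 2 * -1 + c 3 * -1 = 0 := congrArg QuaternionAlgebra.re hc
  have hi : c 0 * 1 + c 1 * 0 + c 2 * 0 + c 3 * 0 = 0 := congrArg QuaternionAlgebra.imI hc
  have hj : c 0 * 0 + c 1 * 0 + c 2 * 1 + c 3 * 0 = 0 := congrArg QuaternionAlgebra.imJ hc
  have hk : c 0 * 0 + c 1 * 0 + c 2 * 0 + c 3 * 1 = 0 := congrArg QuaternionAlgebra.imK hc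
  have h0 : c 0 = 0 := by linarith
  have h1 : c 1 = 0 := by linarith
  have h2 : c 2 = 0 := by linarith
  have h3 : c 3 = 0 := by linarith
  intro n
  fin_cases n
  exacts [h0, h1, h2, h3]

/-- The basis of `ℍ[ℚ]` consisting of the vectors `weight k`. -/
noncomputable def weightBasis : Module.Basis (Fin 4) ℚ ℍ[ℚ] :=
  basisOfLinearIndependentOfCardEqFinrank linearIndependent_weight
    (by rw [Quaternion.finrank_eq_four, Fintype.card_fin])

theorem weightBasis_apply (k : Fin 4) : weightBasis k = weight k := by
  rw [weightBasis, coe_basisOfLinearIndependentOfCardEqFinrank]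

/-- The isomorphism from `GL (Fin 4) ℚ` to the linear automorphisms of the quaternions given by
`weightBasis`. -/
noncomputable def weightEquiv : GL (Fin 4) ℚ ≃* (ℍ[ℚ] ≃ₗ[ℚ] ℍ[ℚ]) :=
  (Matrix.GeneralLinearGroup.toLin' weightBasis).trans
    (LinearMap.GeneralLinearGroup.generalLinearEquiv ℚ ℍ[ℚ])

theorem weightEquiv_eq {u : GL (Fin 4) ℚ} {M : Matrix (Fin 4) (Fin 4) ℚ} (hu : u = M)
    {g : ℍ[ℚ] ≃ₗ[ℚ] ℍ[ℚ]} (hg : ∀ k, g (weight k) = ∑ l, M l k • weight l) :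
    weightEquiv u = g := by
  refine weightBasis.ext' fun k => ?_
  rw [weightBasis_apply, hg]
  refine (Matrix.GeneralLinearGroup.toLin'_apply weightBasis u (weight k)).trans ?_
  rw [hu, ← weightBasis_apply, Module.Basis.repr_self, Finsupp.single_eq_pi_single,
    Matrix.mulVec_single_one, Fintype.linearCombination_apply]
  simp only [weightBasis_apply, Matrix.col_apply]

theorem map_closure_eq_autGroup {u₁ u₂ u₃ u₄ u₅ u₆ : GL (Fin 4) ℚ}
    (h₁ : (u₁ : Matrix (Fin 4) (Fin 4) ℚ) = s1) (h₂ : (u₂ : Matrix (Fin 4) (Fin 4) ℚ) = s2)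
    (h₃ : (u₃ : Matrix (Fin 4) (Fin 4) ℚ) = s3) (h₄ : (u₄ : Matrix (Fin 4) (Fin 4) ℚ) = s4)
    (h₅ : (u₅ : Matrix (Fin 4) (Fin 4) ℚ) = s5) (h₆ : (u₆ : Matrix (Fin 4) (Fin 4) ℚ) = s6) :
    (Subgroup.closure {u₁, u₂, u₃, u₄, u₅, u₆}).map weightEquiv.toMonoidHom = autGroup := by
  have e₁ : weightEquiv u₁ = rootReflection qi := weightEquiv_eq h₁ (by decide +kernel)
  have e₂ : weightEquiv u₂ = rootReflection ω := weightEquiv_eq h₂ (by decide +kernel)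
  have e₃ : weightEquiv u₃ = rootReflection qj := weightEquiv_eq h₃ (by decide +kernel)
  have e₄ : weightEquiv u₄ = rootReflection qk := weightEquiv_eq h₄ (by decide +kernel)
  have e₅ : weightEquiv u₅ = (φ (ω, ω))⁻¹ := weightEquiv_eq h₅ (by decide +kernel)
  have e₆ : weightEquiv u₆ = δ * σ := weightEquiv_eq h₆ (by decide +kernel)
  rw [MonoidHom.map_closure, ← closure_rootReflection_eq_autGroup]
  simp only [MulEquiv.toMonoidHom_eq_coe, MonoidHom.coe_coe, Set.image_insert_eq,
    Set.image_singleton, e₁, e₂, e₃, e₄, e₅, e₆]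

end AutGroup

end AutD4

/-- Conjugacy classes of elements of each order in the automorphism group `V` of the
root system `D₄`: the elements of order `2, 3, 4, 6, 8, 12` form exactly
`7, 3, 5, 7, 1, 1` conjugacy classes of `V`, respectively. -/
theorem autD4_conjugacy_classes (u₁ u₂ u₃ u₄ u₅ u₆ : GL (Fin 4) ℚ)
    (h₁ : (u₁ : Matrix (Fin 4) (Fin 4) ℚ) = s1)
    (h₂ : (u₂ : Matrix (Fin 4) (Fin 4) ℚ) = s2)
    (h₃ : (u₃ : Matrix (Fin 4) (Fin 4) ℚ) = s3)
    (h₄ : (u₄ : Matrix (Fin 4) (Fin 4) ℚ) = s4)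
    (h₅ : (u₅ : Matrix (Fin 4) (Fin 4) ℚ) = s5)
    (h₆ : (u₆ : Matrix (Fin 4) (Fin 4) ℚ) = s6) :
    Nat.card {c : ConjClasses
        ↥(Subgroup.closure {u₁, u₂, u₃, u₄, u₅, u₆} : Subgroup (GL (Fin 4) ℚ)) //
      ∃ g, c = ConjClasses.mk g ∧ orderOf g = 2} = 7 ∧
    Nat.card {c : ConjClasses
        ↥(Subgroup.closure {u₁, u₂, u₃, u₄, u₅, u₆} : Subgroup (GL (Fin 4) ℚ)) //
      ∃ g, c = ConjClasses.mk g ∧ orderOf g = 3} = 3 ∧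
    Nat.card {c : ConjClasses
        ↥(Subgroup.closure {u₁, u₂, u₃, u₄, u₅, u₆} : Subgroup (GL (Fin 4) ℚ)) //
      ∃ g, c = ConjClasses.mk g ∧ orderOf g = 4} = 5 ∧
    Nat.card {c : ConjClasses
        ↥(Subgroup.closure {u₁, u₂, u₃, u₄, u₅, u₆} : Subgroup (GL (Fin 4) ℚ)) //
      ∃ g, c = ConjClasses.mk g ∧ orderOf g = 6} = 7 ∧
    Nat.card {c : ConjClasses
        ↥(Subgroup.closure {u₁, u₂, u₃, u₄, u₅, u₆} : Subgroup (GL (Fin 4) ℚ)) //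
      ∃ g, c = ConjClasses.mk g ∧ orderOf g = 8} = 1 ∧
    Nat.card {c : ConjClasses
        ↥(Subgroup.closure {u₁, u₂, u₃, u₄, u₅, u₆} : Subgroup (GL (Fin 4) ℚ)) //
      ∃ g, c = ConjClasses.mk g ∧ orderOf g = 12} = 1 := by
  let e := (AutD4.weightEquiv.subgroupMap _).trans
    (MulEquiv.subgroupCongr (AutD4.map_closure_eq_autGroup h₁ h₂ h₃ h₄ h₅ h₆))
  simp only [AutD4.card_conjClasses_orderOf_congr e, AutD4.card_conjClasses_autGroup]
  decide
end

section
/- The K-linear endomorphisms F₁ and F₂ of the 10-dimensional space S of homogeneous polynomials of degree 3 in K[X₀,X₁,X₂] commute with each other, where F₁ is induced by the substitution X_i ↦ X_{i+1 (mod 3)} and F₂ by the substitution X_i ↦ ωⁱ·X_i; and for each pair (a,b) ∈ (ℤ/3ℤ)², the joint eigenspace {f ∈ S : F₁(f) = ωᵃ·f and F₂(f) = ω^b·f} has dimension 2 if (a,b) = (0,0) and dimension 1 otherwise. (The ℤ₃×ℤ₃-grading induced on S³(V) by the cyclic shift and the diagonal scaling splits it into one 2-dimensional and eight 1-dimensional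 components.) -/
/-- The endomorphism of `K[X₀,X₁,X₂]` induced by the substitution `X_i ↦ X_{i+1 (mod 3)}`. -/
noncomputable def F1 (K : Type*) [Field K] :
    MvPolynomial (Fin 3) K →ₐ[K] MvPolynomial (Fin 3) K :=
  MvPolynomial.rename (fun i : Fin 3 => i + 1)

/-- The endomorphism of `K[X₀,X₁,X₂]` induced by the substitution `X_i ↦ ωⁱ·X_i`. -/
noncomputable def F2 (K : Type*) [Field K] (ω : K) :
    MvPolynomial (Fin 3) K →ₐ[K] MvPolynomial (Fin 3) K :=
  MvPolynomial.aeval (fun i : Fin 3 => (ω ^ (i : ℕ)) • MvPolynomial.X i)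

/-! For an exponent `b` modulo 3, the substitution `F₂` multiplies each of the three monomials
`X_k² X_{k+b}` by `ω^(3k+b) = ω^b`, while `F₁` permutes them cyclically, so for each
cube root of unity `c` the `c`-eigenspace of `F₁` in their span is the line through
`∑ c⁻ᵏ X_k² X_{k+b}`. These nine monomials and the doubly invariant `X₀X₁X₂` are all the cubic
monomials. Commutation comes from the Heisenberg relation `F₂ F₁ = ωⁿ F₁ F₂` in degree `n`. -/

open MvPolynomial

theorem pow_fin_val_add {M : Type*} [Monoid M] {n : ℕ} {x : M} (hx : x ^ n = 1) (i j : Fin n) :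
    x ^ ((i + j : Fin n) : ℕ) = x ^ (i : ℕ) * x ^ (j : ℕ) := by
  rw [Fin.val_add, ← pow_eq_pow_mod _ hx, pow_add]

section DiagonalSubstitution

variable {σ R : Type*} [CommSemiring R]

theorem aeval_smul_X_monomial (r : σ → R) (d : σ →₀ ℕ) (c : R) :
    aeval (fun i => r i • (X i : MvPolynomial σ R)) (monomial d c) =
      monomial d ((d.prod fun i n => r i ^ n) * c) := by
  simp only [aeval_monomial, smul_eq_C_mul, mul_pow, Finsupp.prod_mul, algebraMap_eq]
  rw [mul_comm _ c, monomial_eq, C_mul, mul_assoc, map_finsuppProd]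
  simp only [map_pow]

theorem coeff_aeval_smul_X (r : σ → R) (f : MvPolynomial σ R) (d : σ →₀ ℕ) :
    coeff d (aeval (fun i => r i • (X i : MvPolynomial σ R)) f) =
      (d.prod fun i n => r i ^ n) * coeff d f := by
  classical
  induction f using MvPolynomial.induction_on' with
  | monomial e c =>
    rw [aeval_smul_X_monomial, coeff_monomial, coeff_monomial]
    split_ifs with h
    · rw [h]
    · rw [mul_zero]
  | add f g hf hg => rw [map_add, coeff_add, coeff_add, hf, hg, mul_add]

theorem aeval_const_smul_X_of_isHomogeneous (c : R) {f : MvPolynomial σ R} {n : ℕ}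
    (hf : f.IsHomogeneous n) :
    aeval (fun i => c • (X i : MvPolynomial σ R)) f = c ^ n • f := by
  ext d
  rw [coeff_aeval_smul_X, coeff_smul, smul_eq_mul]
  by_cases hd : d.degree = n
  · rw [← hd, Finsupp.prod, Finset.prod_pow_eq_pow_sum, Finsupp.degree_apply]
  · rw [hf.coeff_eq_zero hd, mul_zero, mul_zero]

end DiagonalSubstitution

section CubicExponents

open Finsupp

/-- The exponent vector of the monomial `X_k² X_{k+b}`; for fixed `b` these form an orbit of the
cyclic shift. -/
noncomputable def squareExponent (k b : Fin 3) : Fin 3 →₀ ℕ :=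
  single k 2 + single (k + b) 1

/-- The exponent vector of the monomial `X₀X₁X₂`. -/
noncomputable def squarefreeExponent : Fin 3 →₀ ℕ :=
  ∑ i, single i 1

theorem degree_squareExponent (k b : Fin 3) : (squareExponent k b).degree = 3 := by
  rw [squareExponent, map_add, degree_single, degree_single]

theorem degree_squarefreeExponent : squarefreeExponent.degree = 3 := by
  simp [squarefreeExponent]

theorem squarefreeExponent_apply (i : Fin 3) : squarefreeExponent i = 1 := by
  simp [squarefreeExponent, single_apply]

theorem squareExponent_ne_squarefreeExponent (k b : Fin 3) :
    squareExponent k b ≠ squarefreeExponent := fun h => by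
  have hk := DFunLike.congr_fun h k
  rw [squareExponent, squarefreeExponent_apply, Finsupp.add_apply, single_eq_same] at hk
  lia

theorem squareExponent_inj {k b k' b' : Fin 3} :
    squareExponent k b = squareExponent k' b' ↔ k = k' ∧ b = b' := by
  refine ⟨fun h => ?_, fun ⟨hk, hb⟩ => by rw [hk, hb]⟩
  obtain rfl : k = k' := by
    by_contra hne
    have hk := DFunLike.congr_fun h k
    rw [squareExponent, squareExponent, Finsupp.add_apply, Finsupp.add_apply, single_eq_same,
      single_eq_of_ne hne, single_apply, single_apply] at hk
    split_ifs at hk <;> lia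
  exact ⟨rfl, add_left_cancel (single_left_injective one_ne_zero (add_left_cancel h))⟩

theorem eq_squarefreeExponent_or_exists_eq_squareExponent {d : Fin 3 →₀ ℕ} (hd : d.degree = 3) :
    d = squarefreeExponent ∨ ∃ k b, d = squareExponent k b := by
  by_cases hsq : ∃ k, 2 ≤ d k
  · obtain ⟨k, hk⟩ := hsq
    obtain ⟨e, rfl⟩ := le_iff_exists_add.1 (single_le_iff.2 hk)
    have he : e ∈ {e : Fin 3 →₀ ℕ | e.degree = 1} := by
      rw [map_add, degree_single] at hd
      exact Nat.add_left_cancel hd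
    rw [← range_single_one] at he
    obtain ⟨j, rfl⟩ := he
    exact Or.inr ⟨k, j - k, by rw [squareExponent, add_sub_cancel]⟩
  · push Not at hsq
    have hle (i : Fin 3) : d i ≤ squarefreeExponent i :=
      (Nat.le_of_lt_succ (hsq i)).trans_eq (squarefreeExponent_apply i).symm
    have hsum : ∑ i, d i = ∑ i, squarefreeExponent i := by
      rw [← degree_eq_sum, ← degree_eq_sum, hd, degree_squarefreeExponent]
    exact Or.inl (Finsupp.ext fun i =>
      (Finset.sum_eq_sum_iff_of_le fun i _ => hle i).1 hsum i (Finset.mem_univ i))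

theorem mapDomain_add_one_squareExponent (k b : Fin 3) :
    mapDomain (· + 1) (squareExponent k b) = squareExponent (k + 1) b := by
  rw [squareExponent, mapDomain_add, mapDomain_single, mapDomain_single, squareExponent,
    add_right_comm]

theorem mapDomain_add_one_squarefreeExponent :
    mapDomain (· + 1) squarefreeExponent = squarefreeExponent := by
  simp only [squarefreeExponent, mapDomain_finsetSum, mapDomain_single]
  exact Equiv.sum_comp (Equiv.addRight 1) fun i : Fin 3 => single i 1

variable {M : Type*} [CommMonoid M] {ω : M}

theorem prod_pow_squareExponent (hω : ω ^ 3 = 1) (k b : Fin 3) :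
    ((squareExponent k b).prod fun i n => (ω ^ (i : ℕ)) ^ n) = ω ^ (b : ℕ) := by
  rw [squareExponent, prod_add_index' (fun _ => pow_zero _) (fun _ => pow_add _)]
  simp only [prod_single_index, pow_zero, pow_one, pow_fin_val_add hω]
  rw [← mul_assoc, ← pow_succ, pow_right_comm, hω, one_pow, one_mul]

theorem prod_pow_squarefreeExponent (hω : ω ^ 3 = 1) :
    (squarefreeExponent.prod fun i n => (ω ^ (i : ℕ)) ^ n) = 1 := by
  rw [prod_fintype _ _ fun _ => pow_zero _]
  simp only [squarefreeExponent_apply, Fin.prod_univ_three, Fin.val_zero, Fin.val_one,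
    Fin.val_two, pow_one, pow_zero, one_mul]
  rw [← pow_succ', hω]

end CubicExponents

section Substitutions

variable {K : Type*} [Field K]

theorem coeff_F1_mapDomain (f : MvPolynomial (Fin 3) K) (d : Fin 3 →₀ ℕ) :
    coeff (d.mapDomain (· + 1)) (F1 K f) = coeff d f :=
  coeff_rename_mapDomain _ (add_left_injective 1) f d

theorem F2_comp_F1 {ω : K} (hω : ω ^ 3 = 1) :
    (F2 K ω).comp (F1 K) = ((F1 K).comp (F2 K ω)).comp (aeval fun i => ω • X i) := by
  refine algHom_ext fun i => ?_
  simp [F1, F2, pow_fin_val_add hω, smul_smul, mul_comm]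

theorem F2_F1_of_isHomogeneous {ω : K} (hω : ω ^ 3 = 1) {f : MvPolynomial (Fin 3) K} {n : ℕ}
    (hf : f.IsHomogeneous n) : F2 K ω (F1 K f) = ω ^ n • F1 K (F2 K ω f) := by
  have h := DFunLike.congr_fun (F2_comp_F1 hω) f
  simpa only [AlgHom.comp_apply, aeval_const_smul_X_of_isHomogeneous ω hf, map_smul] using h

/-- The space of cubic forms on which `F1` acts as the scalar `c` and `F2 ω` as the scalar `s`. -/
noncomputable def jointEigenspace (ω c s : K) : Submodule K (MvPolynomial (Fin 3) K) :=
  homogeneousSubmodule (Fin 3) K 3 ⊓ Module.End.eigenspace (F1 K).toLinearMap c ⊓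
    Module.End.eigenspace (F2 K ω).toLinearMap s

theorem mem_jointEigenspace {ω c s : K} {f : MvPolynomial (Fin 3) K} :
    f ∈ jointEigenspace ω c s ↔ f.IsHomogeneous 3 ∧ F1 K f = c • f ∧ F2 K ω f = s • f := by
  simp [jointEigenspace, and_assoc]

theorem mul_coeff_mapDomain_of_mem_jointEigenspace {ω c s : K} {f : MvPolynomial (Fin 3) K}
    (hf : f ∈ jointEigenspace ω c s) (d : Fin 3 →₀ ℕ) :
    c * coeff (d.mapDomain (· + 1)) f = coeff d f := by
  rw [← coeff_F1_mapDomain f d, (mem_jointEigenspace.1 hf).2.1, coeff_smul, smul_eq_mul]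

theorem eq_or_coeff_eq_zero_of_mem_jointEigenspace {ω c s : K} {f : MvPolynomial (Fin 3) K}
    (hf : f ∈ jointEigenspace ω c s) (d : Fin 3 →₀ ℕ) :
    (d.prod fun i n => (ω ^ (i : ℕ)) ^ n) = s ∨ coeff d f = 0 := by
  rw [← mul_eq_mul_right_iff, ← coeff_aeval_smul_X, ← smul_eq_mul s, ← coeff_smul,
    ← (mem_jointEigenspace.1 hf).2.2, F2]

/-- The vector `∑ c⁻ᵏ X_k² X_{k+b}`, which spans the `c`-eigenspace of `F1` in the span of the
orbit of `X₀² X_b` when `c` is a cube root of unity. -/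
noncomputable def orbitVector (c : K) (b : Fin 3) : MvPolynomial (Fin 3) K :=
  ∑ k, monomial (squareExponent k b) (c⁻¹ ^ (k : ℕ))

theorem coeff_squareExponent_orbitVector (c : K) (k b b' : Fin 3) :
    coeff (squareExponent k b') (orbitVector c b) = if b = b' then c⁻¹ ^ (k : ℕ) else 0 := by
  classical
  simp [orbitVector, coeff_sum, coeff_monomial, squareExponent_inj, ite_and]

theorem coeff_squarefreeExponent_orbitVector (c : K) (b : Fin 3) :
    coeff squarefreeExponent (orbitVector c b) = 0 := by
  classical
  simp [orbitVector, coeff_sum, coeff_monomial, squareExponent_ne_squarefreeExponent]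

theorem isHomogeneous_orbitVector (c : K) (b : Fin 3) : (orbitVector c b).IsHomogeneous 3 :=
  IsHomogeneous.sum _ _ _ fun k _ => isHomogeneous_monomial _ (degree_squareExponent k b)

theorem F1_orbitVector {c : K} (hc : c ^ 3 = 1) (b : Fin 3) :
    F1 K (orbitVector c b) = c • orbitVector c b := by
  have hc0 : c ≠ 0 := (IsUnit.of_pow_eq_one hc three_ne_zero).ne_zero
  have hshift (k : Fin 3) : c⁻¹ ^ (k : ℕ) = c * c⁻¹ ^ ((k + 1 : Fin 3) : ℕ) := by
    rw [pow_fin_val_add (by rw [inv_pow, hc, inv_one]), Fin.val_one, pow_one, mul_left_comm,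
      mul_inv_cancel₀ hc0, mul_one]
  calc F1 K (orbitVector c b)
      = ∑ k, monomial (squareExponent (k + 1) b) (c⁻¹ ^ (k : ℕ)) := by
        simp only [orbitVector, map_sum, F1, rename_monomial, mapDomain_add_one_squareExponent]
    _ = ∑ k : Fin 3, c • monomial (squareExponent (k + 1) b) (c⁻¹ ^ ((k + 1 : Fin 3) : ℕ)) := by
        simp only [smul_monomial, smul_eq_mul, ← hshift]
    _ = ∑ k : Fin 3, c • monomial (squareExponent k b) (c⁻¹ ^ (k : ℕ)) :=
        Equiv.sum_comp (Equiv.addRight 1) fun k : Fin 3 =>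
          c • monomial (squareExponent k b) (c⁻¹ ^ (k : ℕ))
    _ = c • orbitVector c b := by rw [orbitVector, Finset.smul_sum]

theorem F2_orbitVector {ω : K} (hω : ω ^ 3 = 1) (c : K) (b : Fin 3) :
    F2 K ω (orbitVector c b) = ω ^ (b : ℕ) • orbitVector c b := by
  simp only [orbitVector, F2, map_sum, aeval_smul_X_monomial, prod_pow_squareExponent hω,
    Finset.smul_sum, smul_monomial, smul_eq_mul]

theorem orbitVector_mem_jointEigenspace {ω c : K} (hω : ω ^ 3 = 1) (hc : c ^ 3 = 1) (b : Fin 3) :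
    orbitVector c b ∈ jointEigenspace ω c (ω ^ (b : ℕ)) :=
  mem_jointEigenspace.2
    ⟨isHomogeneous_orbitVector c b, F1_orbitVector hc b, F2_orbitVector hω c b⟩

theorem monomial_squarefreeExponent_mem_jointEigenspace {ω : K} (hω : ω ^ 3 = 1) :
    monomial squarefreeExponent (1 : K) ∈ jointEigenspace ω 1 1 := by
  refine mem_jointEigenspace.2 ⟨isHomogeneous_monomial _ degree_squarefreeExponent, ?_, ?_⟩
  · rw [F1, rename_monomial, mapDomain_add_one_squarefreeExponent, one_smul]
  · rw [F2, aeval_smul_X_monomial, prod_pow_squarefreeExponent hω, one_mul, one_smul]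

theorem coeff_squareExponent_of_mem_jointEigenspace {ω c s : K} (hc : c ≠ 0)
    {f : MvPolynomial (Fin 3) K} (hf : f ∈ jointEigenspace ω c s) (k b : Fin 3) :
    coeff (squareExponent k b) f = c⁻¹ ^ (k : ℕ) * coeff (squareExponent 0 b) f := by
  have hshift (k : Fin 3) :
      coeff (squareExponent (k + 1) b) f = c⁻¹ * coeff (squareExponent k b) f := by
    rw [← mapDomain_add_one_squareExponent]
    exact (eq_inv_mul_iff_mul_eq₀ hc).2 (mul_coeff_mapDomain_of_mem_jointEigenspace hf _)
  fin_cases k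
  · simp
  · simpa using hshift 0
  · calc coeff (squareExponent 2 b) f
        = c⁻¹ * coeff (squareExponent 1 b) f := hshift 1
      _ = c⁻¹ * (c⁻¹ * coeff (squareExponent 0 b) f) := congrArg (c⁻¹ * ·) (hshift 0)
      _ = c⁻¹ ^ 2 * coeff (squareExponent 0 b) f := by ring

theorem coeff_squarefreeExponent_eq_zero_of_mem_jointEigenspace {ω c s : K} (hω : ω ^ 3 = 1)
    (h : ¬(c = 1 ∧ s = 1)) {f : MvPolynomial (Fin 3) K} (hf : f ∈ jointEigenspace ω c s) :
    coeff squarefreeExponent f = 0 := by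
  by_contra hne
  have hc := mul_coeff_mapDomain_of_mem_jointEigenspace hf squarefreeExponent
  have hs := (eq_or_coeff_eq_zero_of_mem_jointEigenspace hf squarefreeExponent).resolve_right hne
  rw [mapDomain_add_one_squarefreeExponent] at hc
  rw [prod_pow_squarefreeExponent hω] at hs
  exact h ⟨(mul_eq_right₀ hne).1 hc, hs.symm⟩

theorem eq_smul_orbitVector_add_monomial_of_mem_jointEigenspace {ω c : K}
    (hω : IsPrimitiveRoot ω 3) (hc : c ≠ 0)
    {b : Fin 3} {f : MvPolynomial (Fin 3) K} (hf : f ∈ jointEigenspace ω c (ω ^ (b : ℕ))) :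
    f = coeff (squareExponent 0 b) f • orbitVector c b +
      monomial squarefreeExponent (coeff squarefreeExponent f) := by
  classical
  ext d
  rw [coeff_add, coeff_smul, smul_eq_mul, coeff_monomial]
  by_cases hd : d.degree = 3
  · obtain rfl | ⟨k, b', rfl⟩ := eq_squarefreeExponent_or_exists_eq_squareExponent hd
    · rw [coeff_squarefreeExponent_orbitVector, mul_zero, zero_add, if_pos rfl]
    · rw [coeff_squareExponent_orbitVector,
        if_neg (squareExponent_ne_squarefreeExponent k b').symm, add_zero]
      split_ifs with hb
      · rw [← hb, coeff_squareExponent_of_mem_jointEigenspace hc hf, mul_comm]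
      · rw [mul_zero]
        refine (eq_or_coeff_eq_zero_of_mem_jointEigenspace hf _).resolve_left fun h => hb ?_
        rw [prod_pow_squareExponent hω.pow_eq_one] at h
        exact Fin.ext (hω.pow_inj b.isLt b'.isLt h.symm)
  · rw [(mem_jointEigenspace.1 hf).1.coeff_eq_zero hd,
      (isHomogeneous_orbitVector c b).coeff_eq_zero hd, mul_zero, zero_add,
      if_neg fun h => hd (by rw [← h, degree_squarefreeExponent])]

theorem finrank_jointEigenspace_eq_one {ω c : K} (hω : IsPrimitiveRoot ω 3) (hc : c ^ 3 = 1)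
    {b : Fin 3} (h : ¬(c = 1 ∧ ω ^ (b : ℕ) = 1)) :
    Module.finrank K (jointEigenspace ω c (ω ^ (b : ℕ))) = 1 := by
  have hmem := orbitVector_mem_jointEigenspace hω.pow_eq_one hc b
  have hne : orbitVector c b ≠ 0 := fun h0 => by
    simpa [h0] using coeff_squareExponent_orbitVector c 0 b b
  have hc0 : c ≠ 0 := (IsUnit.of_pow_eq_one hc three_ne_zero).ne_zero
  have hspan : jointEigenspace ω c (ω ^ (b : ℕ)) = K ∙ orbitVector c b := by
    refine le_antisymm (fun f hf => ?_) ((Submodule.span_singleton_le_iff_mem _ _).2 hmem)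
    rw [eq_smul_orbitVector_add_monomial_of_mem_jointEigenspace hω hc0 hf,
      coeff_squarefreeExponent_eq_zero_of_mem_jointEigenspace hω.pow_eq_one h hf, monomial_zero,
      add_zero]
    exact Submodule.smul_mem _ _ (Submodule.mem_span_singleton_self _)
  rw [hspan, finrank_span_singleton hne]

theorem linearIndependent_orbitVector_monomial (c : K) (b : Fin 3) :
    LinearIndependent K ![orbitVector c b, monomial squarefreeExponent 1] := by
  classical
  refine LinearIndependent.pair_iff.2 fun s t hst => ⟨?_, ?_⟩
  · simpa [coeff_squareExponent_orbitVector, coeff_monomial,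
      (squareExponent_ne_squarefreeExponent 0 b).symm] using
      congrArg (coeff (squareExponent 0 b)) hst
  · simpa [coeff_squarefreeExponent_orbitVector] using congrArg (coeff squarefreeExponent) hst

theorem finrank_jointEigenspace_one_one {ω : K} (hω : IsPrimitiveRoot ω 3) :
    Module.finrank K (jointEigenspace ω 1 1) = 2 := by
  have hmem : orbitVector 1 0 ∈ jointEigenspace ω 1 1 := by
    simpa using orbitVector_mem_jointEigenspace hω.pow_eq_one (one_pow 3) 0
  have hspan : jointEigenspace ω 1 1 =
      Submodule.span K (Set.range ![orbitVector 1 0, monomial squarefreeExponent 1]) := by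
    rw [Matrix.range_cons_cons_empty]
    refine le_antisymm (fun f hf => ?_)
      (Submodule.span_le.2 (Set.pair_subset hmem
        (monomial_squarefreeExponent_mem_jointEigenspace hω.pow_eq_one)))
    have hf_eq := eq_smul_orbitVector_add_monomial_of_mem_jointEigenspace (b := 0) hω one_ne_zero
      (by simpa using hf)
    exact Submodule.mem_span_pair.2
      ⟨_, _, by rw [smul_monomial, smul_eq_mul, mul_one]; exact hf_eq.symm⟩
  rw [hspan, finrank_span_eq_card (linearIndependent_orbitVector_monomial 1 0), Fintype.card_fin]

end Substitutions

theorem S3V_Z3_Z3_grading_general (K : Type*) [Field K] {ω : K} (hω : IsPrimitiveRoot ω 3) :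
    (∀ f ∈ homogeneousSubmodule (Fin 3) K 3, F1 K (F2 K ω f) = F2 K ω (F1 K f)) ∧
    (∀ a b : ZMod 3,
      Module.finrank K
        ↥(homogeneousSubmodule (Fin 3) K 3
          ⊓ Module.End.eigenspace (F1 K).toLinearMap (ω ^ a.val)
          ⊓ Module.End.eigenspace (F2 K ω).toLinearMap (ω ^ b.val))
        = if a = 0 ∧ b = 0 then 2 else 1) := by
  have hω3 : ω ^ 3 = 1 := hω.pow_eq_one
  refine ⟨fun f hf => ?_, fun a b => ?_⟩
  · rw [F2_F1_of_isHomogeneous hω3 hf, hω3, one_smul]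
  · change Module.finrank K (jointEigenspace ω (ω ^ a.val) (ω ^ b.val)) = _
    have hpow (a : ZMod 3) : ω ^ a.val = 1 ↔ a = 0 := by
      rw [hω.pow_eq_one_iff_dvd, ← ZMod.natCast_eq_zero_iff, ZMod.natCast_zmod_val]
    split_ifs with h
    · rw [(hpow a).2 h.1, (hpow b).2 h.2, finrank_jointEigenspace_one_one hω]
    · refine finrank_jointEigenspace_eq_one (b := b) hω ?_ fun h' => h ?_
      · rw [pow_right_comm, hω3, one_pow]
      · exact ⟨(hpow a).1 h'.1, (hpow b).1 h'.2⟩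

/-- On the 10-dimensional space `S` of homogeneous polynomials of degree 3 in
`K[X₀,X₁,X₂]`, the substitutions `F₁ : X_i ↦ X_{i+1}` and `F₂ : X_i ↦ ωⁱX_i` commute, and
the resulting `ℤ₃ × ℤ₃`-grading has joint eigenspace of dimension `2` for `(a,b) = (0,0)`
and of dimension `1` for every `(a,b) ≠ (0,0)`. -/
theorem S3V_Z3_Z3_grading (K : Type*) [Field K] [CharZero K]
    (ω : K) (hω1 : ω ≠ 1) (hω3 : ω ^ 3 = 1) :
    (∀ f ∈ MvPolynomial.homogeneousSubmodule (Fin 3) K 3,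
      F1 K (F2 K ω f) = F2 K ω (F1 K f)) ∧
    (∀ a b : ZMod 3,
      Module.finrank K
        ↥(MvPolynomial.homogeneousSubmodule (Fin 3) K 3
          ⊓ Module.End.eigenspace (F1 K).toLinearMap (ω ^ a.val)
          ⊓ Module.End.eigenspace (F2 K ω).toLinearMap (ω ^ b.val))
        = if a = 0 ∧ b = 0 then 2 else 1) :=
  S3V_Z3_Z3_grading_general K (IsPrimitiveRoot.iff_orderOf.2 (orderOf_eq_prime hω3 hω1))
end
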